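/- arXiv:math/0501480 — 2 statements merged into one kernel-verified Lean document; each statement's English description precedes it below -/
import Mathlib

section
/- For n ≥ 4, every finite index subgroup of the quotient group B_n/Z(B_n) has trivial center. -/
/-- The braid relations on `m` generators `σ_1, …, σ_m` (so this presents `B_{m+1}`). -/
def braidRels (m : ℕ) : Set (FreeGroup (Fin m)) :=
  {r | (∃ i j : Fin m, (j : ℕ) = (i : ℕ) + 1 ∧
        r = .of i * .of j * .of i * (.of j * .of i * .of j)⁻¹) ∨
       (∃ i j : Fin m, (i : ℕ) + 1 < (j : ℕ) ∧
        r = .of i * .of j * (.of j * .of i)⁻¹)}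

/-- Artin's braid group on `n` strands, presented by generators `σ_1, …, σ_{n-1}`
and the braid relations. -/
abbrev BraidGroup (n : ℕ) : Type := PresentedGroup (braidRels (n - 1))

/-- The standard generator `σ_i` (indexed by `i : Fin (n-1)`) of the braid group. -/
def σ {n : ℕ} (i : Fin (n - 1)) : BraidGroup n := PresentedGroup.of i

/-- The element `(σ_1 σ_2 ⋯ σ_{n-1})^n`, which generates the center of `B_n` for `n ≥ 3`. -/
def fullTwist (n : ℕ) : BraidGroup n := (List.ofFn (σ (n := n))).prod ^ n

/-!
Let `x` represent a central element of a finite index subgroup `Γ` of `B_n / Z(B_n)`. Some power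
`σ_i ^ k` with `k > 0` lies in `Γ` modulo the center, so the commutator of `σ_i ^ k` and `x` is
central. A central element of the commutator subgroup is trivial, so `x` commutes with `σ_i ^ k`. An
element commuting with a positive power of `σ_i` commutes with `σ_i`; hence `x` is central.

The two facts about `B_n` come from Garside's theory of the positive braid monoid: if
`σ_i X = σ_j Y` then both sides are multiples of the least common multiple of `σ_i` and `σ_j`. This
makes the monoid cancellative with greatest common divisors. The full twist is central and divisible
by every generator, so the monoid embeds in `B_n` and each braid is a positive braid divided by a
power of the full twist. For positive braids, commutation with powers of generators is settled by
induction on the length, and a central positive braid is determined by its length: dividing two of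
them by their gcd leaves quasi-central coprime elements, but a quasi-central element other than `1`
is divisible by every generator.
-/

section LeftCancel

variable {M : Type*} [Monoid M] [IsLeftCancelMul M]

lemma mul_dvd_mul_left_cancel_iff {a b c : M} : a * b ∣ a * c ↔ b ∣ c := by
  simp only [dvd_def, mul_assoc, mul_right_inj]

lemma semiconjBy_of_mul_left {x y a b c : M} (hx : SemiconjBy x b c)
    (hxy : SemiconjBy (x * y) a c) : SemiconjBy y a b := by
  refine mul_left_cancel (a := x) ?_
  rw [← mul_assoc, hxy.eq, ← mul_assoc, ← hx.eq, mul_assoc]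

end LeftCancel

/-! ### Finite index subgroups of a central quotient -/

section CenterQuotient

open scoped commutatorElement

variable {A : Type*} [Group A] {S : Set A}

lemma mem_center_of_commute_generators (hS : Subgroup.closure S = ⊤) {x : A}
    (h : ∀ s ∈ S, Commute s x) : x ∈ Subgroup.center A := by
  have hle : Subgroup.closure S ≤ Subgroup.centralizer {x} :=
    (Subgroup.closure_le _).2 fun s hs ↦ Subgroup.mem_centralizer_singleton_iff.2 (h s hs)
  rw [Subgroup.mem_center_iff]
  exact fun y ↦ Subgroup.mem_centralizer_singleton_iff.1 (hle (hS ▸ Subgroup.mem_top y))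

lemma center_eq_bot_of_finiteIndex_quotient_center (hS : Subgroup.closure S = ⊤)
    (hpow : ∀ s ∈ S, ∀ x k, k ≠ 0 → Commute (s ^ k) x → Commute s x)
    (hdisj : Disjoint (Subgroup.center A) (commutator A))
    (Γ : Subgroup (A ⧸ Subgroup.center A)) [Γ.FiniteIndex] : Subgroup.center Γ = ⊥ := by
  rw [eq_bot_iff]
  rintro ⟨z, hzΓ⟩ hz
  obtain ⟨x, rfl⟩ := QuotientGroup.mk_surjective z
  suffices x ∈ Subgroup.center A from Subtype.ext ((QuotientGroup.eq_one_iff x).2 this)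
  refine mem_center_of_commute_generators hS fun s hs ↦ ?_
  obtain ⟨k, hk, -, hkΓ⟩ := Subgroup.exists_pow_mem_of_index_ne_zero
    (Subgroup.FiniteIndex.index_ne_zero (H := Γ)) (s : A ⧸ Subgroup.center A)
  have hcomm : Commute ((s ^ k : A) : A ⧸ Subgroup.center A) x :=
    congrArg Subtype.val (Subgroup.mem_center_iff.1 hz ⟨_, hkΓ⟩)
  have hcenter : ⁅s ^ k, x⁆ ∈ Subgroup.center A :=
    (QuotientGroup.eq_one_iff _).1 (commutatorElement_eq_one_iff_commute.2 hcomm)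
  have hcommutator : ⁅s ^ k, x⁆ ∈ commutator A :=
    Subgroup.commutator_mem_commutator (Subgroup.mem_top _) (Subgroup.mem_top _)
  exact hpow s hs x k hk.ne' (commutatorElement_eq_one_iff_commute.1
    (Subgroup.disjoint_def.1 hdisj hcenter hcommutator))

end CenterQuotient

/-! ### Inverting a central element -/

section CentralElement

universe u

variable {M : Type u} [Monoid M] {c : M}

open OreLocalization in
/-- The Ore condition for the powers of a central element holds with `x * c ^ k = c ^ k * x`. -/
abbrev oreSetPowersOfCentral (hc : ∀ x, Commute c x) : OreSet (Submonoid.powers c) where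
  ore_right_cancel x y s h := by
    obtain ⟨_, k, rfl⟩ := s
    refine ⟨⟨_, k, rfl⟩, ?_⟩
    rw [((hc x).pow_left k).eq, ((hc y).pow_left k).eq]
    exact h
  oreNum x _ := x
  oreDenom _ s := s
  ore_eq := by
    rintro x ⟨_, k, rfl⟩
    exact ((hc x).pow_left k).eq

lemma exists_injective_isUnit_of_dvd_central [IsLeftCancelMul M] (hc : ∀ x, Commute c x) :
    ∃ (N : Type u) (_ : Monoid N) (f : M →* N),
      Function.Injective f ∧ ∀ x, x ∣ c → IsUnit (f x) := by
  let _ := oreSetPowersOfCentral hc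
  refine ⟨OreLocalization (Submonoid.powers c) M, inferInstance, OreLocalization.numeratorHom,
    fun x y h ↦ ?_, ?_⟩
  · obtain ⟨s, r, hsr, hs⟩ := OreLocalization.oreDiv_eq_iff.1 h
    rw [OneMemClass.coe_one, mul_one, mul_one] at hs
    rw [← hs] at hsr
    exact (mul_left_cancel (a := (s : M)) hsr).symm
  · rintro x ⟨w, rfl⟩
    have hxw : Commute x w := mul_left_cancel (a := x) (by rw [← (hc x).eq, mul_assoc])
    have hunit : IsUnit (OreLocalization.numeratorHom (S := Submonoid.powers (x * w)) (x * w)) :=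
      OreLocalization.numerator_isUnit ⟨x * w, Submonoid.mem_powers _⟩
    rw [map_mul] at hunit
    exact ((hxw.map _).isUnit_mul_iff.1 hunit).1

end CentralElement

/-! ### The full twist of a braid sequence -/

/-- The sequence `t 0, …, t (m - 1)` satisfies the relations of the standard generators of the braid
group on `m + 1` strands. -/
structure IsBraidSequence {M : Type*} [Monoid M] (t : ℕ → M) (m : ℕ) : Prop where
  commute : ∀ {i j}, i + 1 < j → j < m → Commute (t i) (t j)
  braid : ∀ {i}, i + 1 < m → t i * t (i + 1) * t i = t (i + 1) * t i * t (i + 1)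

section AscendingProd

variable {M : Type*} [Monoid M]

/-- The product `t j * t (j + 1) * ⋯ * t (j + k - 1)`. -/
def ascendingProd (t : ℕ → M) (j k : ℕ) : M := ((List.range' j k).map t).prod

variable (t : ℕ → M) (j k : ℕ)

lemma ascendingProd_succ : ascendingProd t j (k + 1) = ascendingProd t j k * t (j + k) := by
  simp [ascendingProd, List.range'_concat]

lemma ascendingProd_succ' : ascendingProd t j (k + 1) = t j * ascendingProd t (j + 1) k := by
  simp [ascendingProd, List.range'_succ]

end AscendingProd

namespace IsBraidSequence

variable {M : Type*} [Monoid M] {t : ℕ → M} {m i j k : ℕ}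

lemma commute_ascendingProd (ht : IsBraidSequence t m) (hi : j + k < i) (him : i < m) :
    Commute (ascendingProd t j k) (t i) := by
  induction k with
  | zero => exact Commute.one_left _
  | succ k ih =>
    rw [ascendingProd_succ]
    exact (ih (by omega)).mul_left (ht.commute (by omega) him)

lemma semiconjBy_ascendingProd (ht : IsBraidSequence t m) (hj : j ≤ i) (hi : i + 1 < j + k)
    (hk : j + k ≤ m) : SemiconjBy (ascendingProd t j k) (t i) (t (i + 1)) := by
  induction k with
  | zero => omega
  | succ k ih =>
    obtain hlt | hge := Nat.lt_or_ge (i + 1) (j + k)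
    · rw [ascendingProd_succ]
      exact (ih hlt (by omega)).mul_left (ht.commute hlt (by omega)).symm
    · obtain ⟨l, rfl⟩ : ∃ l, k = l + 1 := ⟨k - 1, by omega⟩
      obtain rfl : i = j + l := by omega
      have hbraid : SemiconjBy (t (j + l) * t (j + l + 1)) (t (j + l)) (t (j + l + 1)) :=
        (ht.braid (by omega)).trans (mul_assoc ..)
      rw [ascendingProd_succ, ascendingProd_succ, mul_assoc]
      exact (ht.commute_ascendingProd (by omega) (by omega)).semiconjBy.mul_left hbraid

lemma semiconjBy_ascendingProd_pow (ht : IsBraidSequence t m) (h : i + k < m) :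
    SemiconjBy (ascendingProd t 0 m ^ k) (t i) (t (i + k)) := by
  induction k with
  | zero => exact (pow_zero (ascendingProd t 0 m)).symm ▸ SemiconjBy.one_left _
  | succ k ih =>
    rw [pow_succ']
    exact (ht.semiconjBy_ascendingProd (i := i + k) (Nat.zero_le _) (by omega) (by omega)).mul_left
      (ih (by omega))

lemma semiconjBy_ascendingProd_ascendingProd (ht : IsBraidSequence t m) (hk : k < m) :
    SemiconjBy (ascendingProd t 0 m) (ascendingProd t 0 k) (ascendingProd t 1 k) := by
  induction k with
  | zero => exact SemiconjBy.one_right _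
  | succ k ih =>
    rw [ascendingProd_succ, ascendingProd_succ, zero_add, add_comm 1 k]
    exact (ih (by omega)).mul_right
      (ht.semiconjBy_ascendingProd (Nat.zero_le k) (by omega) (by omega))

lemma semiconjBy_ascendingProd_sq (ht : IsBraidSequence t (k + 1)) :
    SemiconjBy (ascendingProd t 0 (k + 1) ^ 2) (t k) (t 0) := by
  have hlast : ascendingProd t 0 (k + 1) = ascendingProd t 0 k * t k := by
    rw [ascendingProd_succ, zero_add]
  have hsq : ascendingProd t 0 (k + 1) ^ 2 =
      ascendingProd t 1 k * ascendingProd t 0 (k + 1) * t k := by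
    rw [← (ht.semiconjBy_ascendingProd_ascendingProd k.lt_succ_self).eq, mul_assoc, ← hlast, sq]
  rw [SemiconjBy]
  nth_rw 2 [hsq]
  rw [← mul_assoc, ← mul_assoc, ← ascendingProd_succ', ← sq]

lemma commute_ascendingProd_pow (ht : IsBraidSequence t m) (hi : i < m) :
    Commute (ascendingProd t 0 m ^ (m + 1)) (t i) := by
  obtain ⟨r, rfl⟩ : ∃ r, m = r + 1 := ⟨m - 1, by omega⟩
  have hexp : r + 1 + 1 = i + (2 + (r - i)) := by omega
  have hup : SemiconjBy (ascendingProd t 0 (r + 1) ^ (r - i)) (t i) (t r) := by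
    simpa [Nat.add_sub_of_le (Nat.le_of_lt_succ hi)] using
      ht.semiconjBy_ascendingProd_pow (i := i) (k := r - i) (by omega)
  have hdown : SemiconjBy (ascendingProd t 0 (r + 1) ^ i) (t 0) (t i) := by
    simpa using ht.semiconjBy_ascendingProd_pow (i := 0) (k := i) (by omega)
  rw [hexp, pow_add, pow_add]
  exact hdown.mul_left (ht.semiconjBy_ascendingProd_sq.mul_left hup)

lemma dvd_ascendingProd_pow (ht : IsBraidSequence t m) (hi : i < m) :
    t i ∣ ascendingProd t 0 m ^ (m + 1) := by
  have hshift : SemiconjBy (ascendingProd t 0 m ^ i) (t 0) (t i) := by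
    simpa using ht.semiconjBy_ascendingProd_pow (i := 0) (k := i) (by omega)
  have hfirst : ascendingProd t 0 m = t 0 * ascendingProd t 1 (m - 1) := by
    rw [← ascendingProd_succ', Nat.sub_add_cancel (by omega)]
  refine dvd_trans ?_ (pow_dvd_pow _ (by omega : i + 1 ≤ m + 1))
  refine ⟨ascendingProd t 0 m ^ i * ascendingProd t 1 (m - 1), ?_⟩
  rw [pow_succ, ← mul_assoc (t i), ← hshift.eq, mul_assoc, ← hfirst]

end IsBraidSequence

/-! ### Simply laced Artin monoids -/

/-- The defining relations of the simply laced Artin monoid of a graph: adjacent vertices satisfy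
the braid relation, the others commute. -/
inductive ArtinRel {V : Type*} (G : SimpleGraph V) : FreeMonoid V → FreeMonoid V → Prop
  | braid {a b : V} (h : G.Adj a b) :
      ArtinRel G (.of a * .of b * .of a) (.of b * .of a * .of b)
  | comm {a b : V} (h : ¬G.Adj a b) : ArtinRel G (.of a * .of b) (.of b * .of a)

/-- The simply laced Artin monoid of a graph. For the path on `n - 1` vertices it is the monoid of
positive braids on `n` strands. -/
abbrev ArtinMonoid {V : Type*} (G : SimpleGraph V) : Type _ := PresentedMonoid (ArtinRel G)

namespace ArtinMonoid

variable {V : Type*} {G : SimpleGraph V}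

/-- The generator of the Artin monoid attached to a vertex. -/
def gen (a : V) : ArtinMonoid G := PresentedMonoid.of (ArtinRel G) a

variable {a b c : V} {X Y p q x y : ArtinMonoid G}

lemma commute_gen (h : ¬G.Adj a b) : Commute (gen a : ArtinMonoid G) (gen b) :=
  PresentedMonoid.mk_eq_mk_of_rel (.comm h)

lemma gen_braid (h : G.Adj a b) :
    (gen a * gen b * gen a : ArtinMonoid G) = gen b * gen a * gen b :=
  PresentedMonoid.mk_eq_mk_of_rel (.braid h)

lemma gen_mul_gen_mul_comm (h : ¬G.Adj a b) (x : ArtinMonoid G) :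
    gen a * (gen b * x) = gen b * (gen a * x) :=
  (commute_gen h).left_comm x

lemma gen_braid_mul (h : G.Adj a b) (x : ArtinMonoid G) :
    gen a * (gen b * (gen a * x)) = gen b * (gen a * (gen b * x)) := by
  simpa only [mul_assoc] using congrArg (· * x) (gen_braid h)

@[elab_as_elim]
lemma induction_gen_mul {motive : ArtinMonoid G → Prop} (x : ArtinMonoid G) (one : motive 1)
    (gen_mul : ∀ a y, motive y → motive (gen a * y)) : motive x := by
  obtain ⟨w, rfl⟩ := PresentedMonoid.surjective_mk x
  induction w using FreeMonoid.inductionOn' with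
  | one => exact one
  | of_mul a w ih => exact gen_mul a _ ih

lemma eq_one_or_eq_gen_mul (x : ArtinMonoid G) : x = 1 ∨ ∃ a y, x = gen a * y := by
  induction x using induction_gen_mul with
  | one => exact .inl rfl
  | gen_mul a y _ => exact .inr ⟨a, y, rfl⟩

/-- The word length as a homomorphism; it exists because the relations are homogeneous. -/
def lengthHom : ArtinMonoid G →* Multiplicative ℕ :=
  PresentedMonoid.lift (fun _ ↦ .ofAdd 1) (by rintro _ _ (_ | _) <;> rfl)

/-- The word length. -/
def length (x : ArtinMonoid G) : ℕ := (lengthHom x).toAdd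

@[simp] lemma length_one : length (1 : ArtinMonoid G) = 0 := by simp [length]

@[simp] lemma length_gen (a : V) : length (gen a : ArtinMonoid G) = 1 := rfl

@[simp] lemma length_mul (x y : ArtinMonoid G) : length (x * y) = length x + length y := by
  simp [length]

lemma length_mk (w : FreeMonoid V) : length (PresentedMonoid.mk (ArtinRel G) w) = w.length := by
  induction w using FreeMonoid.inductionOn' with
  | one => exact length_one
  | of_mul a w ih => rw [map_mul, length_mul, ih, FreeMonoid.length_mul]; rfl

lemma eq_one_of_length_eq_zero (h : length x = 0) : x = 1 := by
  obtain rfl | ⟨a, y, rfl⟩ := eq_one_or_eq_gen_mul x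
  · rfl
  · simp at h

lemma exists_eq_gen_of_length_eq_one (h : length x = 1) : ∃ a, x = gen a := by
  obtain rfl | ⟨a, y, rfl⟩ := eq_one_or_eq_gen_mul x
  · simp at h
  · have hy : y = 1 := eq_one_of_length_eq_zero (by simpa using h)
    exact ⟨a, by rw [hy, mul_one]⟩

lemma length_le_of_dvd (h : x ∣ y) : length x ≤ length y := by
  obtain ⟨z, rfl⟩ := h
  simp

lemma length_eq_of_gen_mul_eq (h : gen a * X = gen b * Y) : length X = length Y := by
  simpa using congrArg length h

/-! ### Common multiples of generators -/

open Classical in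
/-- The complement of `a` in the least common right multiple of `a` and `b`: this multiple is
`gen a * residue a b = gen b * residue b a`. -/
noncomputable def residue (a b : V) : ArtinMonoid G :=
  if G.Adj a b then gen b * gen a else if a = b then 1 else gen b

lemma residue_self (a : V) : (residue a a : ArtinMonoid G) = 1 := by
  simp [residue]

lemma residue_of_adj (h : G.Adj a b) : (residue a b : ArtinMonoid G) = gen b * gen a := by
  simp [residue, h]

lemma residue_of_not_adj (hne : a ≠ b) (h : ¬G.Adj a b) :
    (residue a b : ArtinMonoid G) = gen b := by
  simp [residue, h, hne]

lemma gen_dvd_residue (hne : a ≠ b) : gen b ∣ (residue a b : ArtinMonoid G) := by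
  by_cases h : G.Adj a b
  · exact ⟨gen a, residue_of_adj h⟩
  · rw [residue_of_not_adj hne h]

lemma gen_mul_residue_comm (a b : V) :
    (gen a * residue a b : ArtinMonoid G) = gen b * residue b a := by
  obtain rfl | hne := eq_or_ne a b
  · rfl
  by_cases h : G.Adj a b
  · rw [residue_of_adj h, residue_of_adj h.symm, ← mul_assoc, ← mul_assoc, gen_braid h]
  · rw [residue_of_not_adj hne h, residue_of_not_adj hne.symm (mt SimpleGraph.Adj.symm h),
      (commute_gen h).eq]

/-- The equality `gen a * X = gen b * Y` comes from a multiple of the least common multiple of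
the generators `a` and `b`. -/
def FactorsThroughLcm (a b : V) (X Y : ArtinMonoid G) : Prop :=
  ∃ Z, X = residue a b * Z ∧ Y = residue b a * Z

lemma factorsThroughLcm_self_iff : FactorsThroughLcm a a X Y ↔ X = Y := by
  simp [FactorsThroughLcm, residue_self, eq_comm]

lemma factorsThroughLcm_iff_of_adj (h : G.Adj a b) :
    FactorsThroughLcm a b X Y ↔
      ∃ Z, X = gen b * (gen a * Z) ∧ Y = gen a * (gen b * Z) := by
  simp only [FactorsThroughLcm, residue_of_adj h, residue_of_adj h.symm, mul_assoc]

lemma factorsThroughLcm_iff_of_not_adj (hne : a ≠ b) (h : ¬G.Adj a b) :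
    FactorsThroughLcm a b X Y ↔ ∃ Z, X = gen b * Z ∧ Y = gen a * Z := by
  simp only [FactorsThroughLcm, residue_of_not_adj hne h,
    residue_of_not_adj hne.symm (mt SimpleGraph.Adj.symm h)]

lemma FactorsThroughLcm.symm (h : FactorsThroughLcm a b X Y) : FactorsThroughLcm b a Y X := by
  obtain ⟨Z, hX, hY⟩ := h
  exact ⟨Z, hY, hX⟩

lemma FactorsThroughLcm.mul_right (h : FactorsThroughLcm a b X Y) (W : ArtinMonoid G) :
    FactorsThroughLcm a b (X * W) (Y * W) := by
  obtain ⟨Z, rfl, rfl⟩ := h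
  exact ⟨Z * W, mul_assoc .., mul_assoc ..⟩

variable (G) in
/-- Garside's lemma for elements of length at most `L`: the induction hypothesis in its proof. -/
def LcmPropertyUpTo (L : ℕ) : Prop :=
  ∀ ⦃a b : V⦄ ⦃X Y : ArtinMonoid G⦄, length X < L → gen a * X = gen b * Y →
    FactorsThroughLcm a b X Y

namespace LcmPropertyUpTo

variable {L : ℕ} {Z : ArtinMonoid G}

lemma cancel (H : LcmPropertyUpTo G L) (hX : length X < L) (h : gen a * X = gen a * Y) : X = Y :=
  factorsThroughLcm_self_iff.1 (H hX h)

lemma exists_of_adj (H : LcmPropertyUpTo G L) (hab : G.Adj a b) (hX : length X < L)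
    (h : gen a * X = gen b * Y) : ∃ Z, X = gen b * (gen a * Z) ∧ Y = gen a * (gen b * Z) :=
  (factorsThroughLcm_iff_of_adj hab).1 (H hX h)

lemma exists_of_not_adj (H : LcmPropertyUpTo G L) (hne : a ≠ b) (hab : ¬G.Adj a b)
    (hX : length X < L) (h : gen a * X = gen b * Y) : ∃ Z, X = gen b * Z ∧ Y = gen a * Z :=
  (factorsThroughLcm_iff_of_not_adj hne hab).1 (H hX h)

/-- Infinite descent: the hypotheses reproduce themselves, with the roles of the three vertices
permuted, for an element shorter than `W`. -/
lemma triangle_descent (H : LcmPropertyUpTo G L) {a b c : V} {W U U' : ArtinMonoid G}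
    (hab : G.Adj a b) (hac : G.Adj a c) (hbc : G.Adj b c) (hW : length W < L)
    (hb : gen b * W = gen a * (gen c * U)) (hc : gen c * W = gen a * U') : False := by
  have hU := length_eq_of_gen_mul_eq hb
  obtain ⟨T, hWT, hT⟩ := H.exists_of_adj hab.symm hW hb
  obtain ⟨T', hWT', -⟩ := H.exists_of_adj hac.symm hW hc
  have hlength : length W = 1 + (1 + length T) := by rw [hWT]; simp only [length_mul, length_gen]
  simp only [length_mul, length_gen] at hU
  have hbT : gen b * T = gen c * T' :=
    H.cancel (by simp only [length_mul, length_gen]; omega) (hWT.symm.trans hWT')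
  obtain ⟨R, -, haT⟩ := H.exists_of_adj hbc.symm (by omega) hT
  exact H.triangle_descent hac.symm hbc.symm hab (by omega) haT hbT
termination_by length W
decreasing_by omega

lemma trans_of_adj_of_not_adj (H : LcmPropertyUpTo G L) (hca : G.Adj c a) (hne : c ≠ b)
    (hcb : ¬G.Adj c b) (hX : length (gen c * X) < L) (h : gen a * (gen c * X) = gen b * Y) :
    FactorsThroughLcm a b (gen c * (gen a * X)) (gen c * Y) := by
  have hne_ab : a ≠ b := by rintro rfl; exact hcb hca
  by_cases hab : G.Adj a b
  · obtain ⟨Z, hZ, rfl⟩ := H.exists_of_adj hab hX h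
    have hl := length_eq_of_gen_mul_eq hZ
    simp only [length_mul, length_gen] at hX hl
    obtain ⟨W, rfl, hW⟩ := H.exists_of_not_adj hne hcb (by omega) hZ
    obtain ⟨U, rfl, rfl⟩ := H.exists_of_adj hca.symm (by omega) hW
    refine (factorsThroughLcm_iff_of_adj hab).2 ⟨gen c * (gen a * (gen b * U)), ?_, ?_⟩
    · rw [gen_braid_mul hab, gen_mul_gen_mul_comm hcb, ← gen_mul_gen_mul_comm hcb U,
        gen_braid_mul hca]
    · rw [← gen_mul_gen_mul_comm hcb, gen_braid_mul hca, gen_braid_mul hab,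
        gen_mul_gen_mul_comm hcb]
  · obtain ⟨Z, hZ, rfl⟩ := H.exists_of_not_adj hne_ab hab hX h
    rw [length_mul] at hX
    obtain ⟨W, rfl, rfl⟩ := H.exists_of_not_adj hne hcb (by omega) hZ
    refine (factorsThroughLcm_iff_of_not_adj hne_ab hab).2 ⟨gen c * (gen a * W), ?_, ?_⟩
    · rw [gen_mul_gen_mul_comm hab, gen_mul_gen_mul_comm hcb]
    · rw [gen_braid_mul hca]

lemma trans_of_not_adj (H : LcmPropertyUpTo G L) (hca : ¬G.Adj c a) (hcb : ¬G.Adj c b)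
    (hX : length X < L) (h : gen a * X = gen b * Y) :
    FactorsThroughLcm a b (gen c * X) (gen c * Y) := by
  obtain ⟨Z, rfl, rfl⟩ := H hX h
  have hcomm : ∀ {d e : V}, ¬G.Adj c d → ¬G.Adj c e →
      Commute (gen c : ArtinMonoid G) (residue d e) := by
    intro d e hd he
    unfold residue
    split_ifs
    · exact (commute_gen he).mul_right (commute_gen hd)
    · exact Commute.one_right _
    · exact commute_gen he
  exact ⟨gen c * Z, (hcomm hca hcb).left_comm Z, (hcomm hcb hca).left_comm Z⟩

lemma trans_of_adj (H : LcmPropertyUpTo G L) (hca : G.Adj c a) (hcb : G.Adj c b)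
    (hX : length (gen c * X) < L) (h : gen a * (gen c * X) = gen b * (gen c * Y)) :
    FactorsThroughLcm a b (gen c * (gen a * X)) (gen c * (gen b * Y)) := by
  have hXY := length_eq_of_gen_mul_eq h
  simp only [length_mul, length_gen] at hXY
  obtain rfl | hne := eq_or_ne a b
  · have hcX := H.cancel hX h
    rw [length_mul] at hX
    rw [factorsThroughLcm_self_iff, H.cancel (by omega) hcX]
  by_cases hab : G.Adj a b
  · obtain ⟨Z, hZX, hZY⟩ := H.exists_of_adj hab hX h
    have hl := length_eq_of_gen_mul_eq hZX
    simp only [length_mul, length_gen] at hX hl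
    obtain ⟨W, -, haZ⟩ := H.exists_of_adj hcb (by omega) hZX
    obtain ⟨W', -, hbZ⟩ := H.exists_of_adj hca (by omega) hZY
    exact (H.triangle_descent hcb hca hab.symm (by omega) hbZ haZ).elim
  · obtain ⟨Z, hZX, hZY⟩ := H.exists_of_not_adj hne hab hX h
    have hl := length_eq_of_gen_mul_eq hZX
    simp only [length_mul, length_gen] at hX
    obtain ⟨W, rfl, rfl⟩ := H.exists_of_adj hcb (by omega) hZX
    obtain ⟨W', rfl, hW'⟩ := H.exists_of_adj hca (by omega) hZY
    simp only [length_mul, length_gen] at hX hXY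
    have hbW : gen b * W = gen a * W' := H.cancel (by simp only [length_mul, length_gen]; omega) hW'
    obtain ⟨U, rfl, rfl⟩ :=
      H.exists_of_not_adj hne.symm (mt SimpleGraph.Adj.symm hab) (by omega) hbW
    refine (factorsThroughLcm_iff_of_not_adj hne hab).2
      ⟨gen c * (gen b * (gen a * (gen c * U))), ?_, ?_⟩
    · rw [gen_mul_gen_mul_comm hab, ← gen_braid_mul hca, gen_braid_mul hcb]
    · rw [← gen_mul_gen_mul_comm hab, ← gen_braid_mul hcb, gen_braid_mul hca,
        ← gen_mul_gen_mul_comm hab]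

/-- The cube condition of Garside theory for the triple `a`, `c`, `b`. -/
lemma trans (H : LcmPropertyUpTo G L) (hY : length Y ≤ L)
    (hac : FactorsThroughLcm a c X Y) (hcb : FactorsThroughLcm c b Y Z) :
    FactorsThroughLcm a b X Z := by
  obtain rfl | hne_ac := eq_or_ne a c
  · rwa [factorsThroughLcm_self_iff.1 hac]
  obtain rfl | hne_cb := eq_or_ne c b
  · rwa [← factorsThroughLcm_self_iff.1 hcb]
  by_cases hac' : G.Adj a c <;> by_cases hcb' : G.Adj c b
  · obtain ⟨Z₁, rfl, rfl⟩ := (factorsThroughLcm_iff_of_adj hac').1 hac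
    obtain ⟨Z₂, h, rfl⟩ := (factorsThroughLcm_iff_of_adj hcb').1 hcb
    exact H.trans_of_adj hac'.symm hcb' (by simp only [length_mul, length_gen] at hY ⊢; omega) h
  · obtain ⟨Z₁, rfl, rfl⟩ := (factorsThroughLcm_iff_of_adj hac').1 hac
    obtain ⟨Z₂, h, rfl⟩ := (factorsThroughLcm_iff_of_not_adj hne_cb hcb').1 hcb
    exact H.trans_of_adj_of_not_adj hac'.symm hne_cb hcb'
      (by simp only [length_mul, length_gen] at hY ⊢; omega) h
  · obtain ⟨Z₁, rfl, rfl⟩ := (factorsThroughLcm_iff_of_not_adj hne_ac hac').1 hac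
    obtain ⟨Z₂, h, rfl⟩ := (factorsThroughLcm_iff_of_adj hcb').1 hcb
    have hl := length_eq_of_gen_mul_eq h
    exact (H.trans_of_adj_of_not_adj hcb' hne_ac.symm (mt SimpleGraph.Adj.symm hac')
      (by simp only [length_mul, length_gen] at hY hl ⊢; omega) h.symm).symm
  · obtain ⟨Z₁, rfl, rfl⟩ := (factorsThroughLcm_iff_of_not_adj hne_ac hac').1 hac
    obtain ⟨Z₂, h, rfl⟩ := (factorsThroughLcm_iff_of_not_adj hne_cb hcb').1 hcb
    rw [length_mul, length_gen] at hY
    exact H.trans_of_not_adj (mt SimpleGraph.Adj.symm hac') hcb' (by omega) h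

end LcmPropertyUpTo

/-! ### Garside's lemma and cancellativity -/

variable (G) in
/-- The conclusion of Garside's lemma for two nonempty words, in terms of their first letters. -/
def WordsFactorThroughLcm (w w' : FreeMonoid V) : Prop :=
  ∀ ⦃a b : V⦄ ⦃u v : FreeMonoid V⦄, w = .of a * u → w' = .of b * v →
    FactorsThroughLcm a b (PresentedMonoid.mk (ArtinRel G) u) (PresentedMonoid.mk (ArtinRel G) v)

namespace WordsFactorThroughLcm

variable {u v w w' w'' : FreeMonoid V}

lemma refl (w : FreeMonoid V) : WordsFactorThroughLcm G w w := by
  intro a b u v hu hv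
  obtain ⟨rfl, rfl⟩ := List.cons.inj (hu.symm.trans hv)
  exact factorsThroughLcm_self_iff.2 rfl

lemma symm (h : WordsFactorThroughLcm G w w') : WordsFactorThroughLcm G w' w :=
  fun _ _ _ _ hu hv ↦ (h hv hu).symm

lemma of_rel (h : ArtinRel G w w') : WordsFactorThroughLcm G w w' := by
  intro a b u v hu hv
  obtain hab | @⟨c, d, hab⟩ := h
  · obtain ⟨rfl, rfl⟩ := List.cons.inj hu
    obtain ⟨rfl, rfl⟩ := List.cons.inj hv
    exact (factorsThroughLcm_iff_of_adj hab).2 ⟨1, rfl, rfl⟩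
  · obtain ⟨rfl, rfl⟩ := List.cons.inj hu
    obtain ⟨rfl, rfl⟩ := List.cons.inj hv
    obtain rfl | hne := eq_or_ne c d
    · exact factorsThroughLcm_self_iff.2 rfl
    · exact (factorsThroughLcm_iff_of_not_adj hne hab).2 ⟨1, rfl, rfl⟩

lemma trans {L : ℕ} (H : LcmPropertyUpTo G L) (hlength : w.length = w'.length)
    (hL : w'.length ≤ L + 1) (h : WordsFactorThroughLcm G w w')
    (h' : WordsFactorThroughLcm G w' w'') : WordsFactorThroughLcm G w w'' := by
  intro a b u v hu hv
  induction w' using FreeMonoid.casesOn with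
  | one => simp [hu] at hlength
  | of_mul c z =>
    refine H.trans ?_ (h hu rfl) (h' rfl hv)
    rw [length_mk]
    simpa [add_comm] using hL

lemma mul (hlength : w.length = w'.length)
    (heq : PresentedMonoid.mk (ArtinRel G) u = PresentedMonoid.mk (ArtinRel G) v)
    (h : WordsFactorThroughLcm G w w') (h' : WordsFactorThroughLcm G u v) :
    WordsFactorThroughLcm G (w * u) (w' * v) := by
  intro a b x y hx hy
  induction w using FreeMonoid.casesOn with
  | one =>
    obtain rfl : w' = 1 := FreeMonoid.length_eq_zero.1 hlength.symm
    exact h' hx hy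
  | of_mul c s =>
    induction w' using FreeMonoid.casesOn with
    | one => simp at hlength
    | of_mul d t =>
      obtain ⟨rfl, rfl⟩ := List.cons.inj hx
      obtain ⟨rfl, rfl⟩ := List.cons.inj hy
      have := (h rfl rfl).mul_right (PresentedMonoid.mk (ArtinRel G) u)
      rwa [← map_mul, heq, ← map_mul] at this

lemma of_conGen {L : ℕ} (H : LcmPropertyUpTo G L) (h : ConGen.Rel (ArtinRel G) w w')
    (hL : w.length ≤ L + 1) : WordsFactorThroughLcm G w w' := by
  have length_eq {x y : FreeMonoid V} (h : ConGen.Rel (ArtinRel G) x y) : x.length = y.length := by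
    rw [← length_mk (G := G) x, PresentedMonoid.mk_eq_mk_iff.2 h, length_mk]
  induction h with
  | of x y h => exact of_rel h
  | refl x => exact refl x
  | symm h ih => exact (ih (length_eq h ▸ hL)).symm
  | trans h₁ _ ih₁ ih₂ =>
    have hl := length_eq h₁
    exact trans H hl (hl ▸ hL) (ih₁ hL) (ih₂ (hl ▸ hL))
  | mul h₁ h₂ ih₁ ih₂ =>
    rw [FreeMonoid.length_mul] at hL
    exact mul (length_eq h₁) (PresentedMonoid.mk_eq_mk_iff.2 h₂) (ih₁ (by omega)) (ih₂ (by omega))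

end WordsFactorThroughLcm

lemma lcmPropertyUpTo (L : ℕ) : LcmPropertyUpTo G L := by
  induction L with
  | zero => exact fun a b X Y hX ↦ (Nat.not_lt_zero _ hX).elim
  | succ L ih =>
    intro a b X Y hX h
    obtain ⟨u, rfl⟩ := PresentedMonoid.surjective_mk X
    obtain ⟨v, rfl⟩ := PresentedMonoid.surjective_mk Y
    rw [length_mk] at hX
    refine WordsFactorThroughLcm.of_conGen (w := .of a * u) (w' := .of b * v) ih
      (PresentedMonoid.mk_eq_mk_iff.1 h) ?_ rfl rfl
    rw [FreeMonoid.length_mul, FreeMonoid.length_of]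
    omega

lemma factorsThroughLcm_of_gen_mul_eq (h : gen a * X = gen b * Y) : FactorsThroughLcm a b X Y :=
  lcmPropertyUpTo _ (Nat.lt_succ_self _) h

instance : IsLeftCancelMul (ArtinMonoid G) where
  mul_left_cancel x y z h := by
    induction x using induction_gen_mul with
    | one => simpa using h
    | gen_mul a x ih =>
      simp only [mul_assoc] at h
      exact ih (factorsThroughLcm_self_iff.1 (factorsThroughLcm_of_gen_mul_eq h))

/-- The anti-automorphism reversing words. -/
def reverse : ArtinMonoid G →* (ArtinMonoid G)ᵐᵒᵖ :=
  PresentedMonoid.lift (fun a ↦ MulOpposite.op (gen a)) (by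
    rintro _ _ (h | h)
    · simpa [mul_assoc, ← MulOpposite.op_mul] using gen_braid h
    · simpa [← MulOpposite.op_mul] using (commute_gen h).eq.symm)

@[simp] lemma reverse_gen (a : V) : reverse (gen a : ArtinMonoid G) = MulOpposite.op (gen a) := rfl

lemma reverse_reverse (x : ArtinMonoid G) : (reverse (reverse x).unop).unop = x := by
  induction x using induction_gen_mul with
  | one => simp
  | gen_mul a y ih => simp [ih]

lemma reverse_injective : Function.Injective (reverse : ArtinMonoid G → (ArtinMonoid G)ᵐᵒᵖ) :=
  fun x y h ↦ by rw [← reverse_reverse x, h, reverse_reverse]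

instance : IsRightCancelMul (ArtinMonoid G) where
  mul_right_cancel x y z h := by
    apply reverse_injective
    simpa using congrArg reverse h

/-! ### Conjugation of powers of generators -/

lemma eq_of_gen_dvd_gen_pow {k : ℕ} (h : (gen a : ArtinMonoid G) ∣ gen b ^ k) : a = b := by
  induction k with
  | zero => simpa using length_le_of_dvd h
  | succ k ih =>
    by_contra hne
    obtain ⟨u, hu⟩ := h
    rw [pow_succ'] at hu
    obtain ⟨Z, hZ, -⟩ := factorsThroughLcm_of_gen_mul_eq hu
    exact hne (ih (hZ ▸ (gen_dvd_residue (Ne.symm hne)).mul_right Z))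

lemma gen_injective : Function.Injective (gen : V → ArtinMonoid G) :=
  fun a b h ↦ eq_of_gen_dvd_gen_pow (k := 1) (by rw [h, pow_one])

lemma gen_mul_gen_dvd_of_gen_dvd_pow_mul (h : G.Adj b c) {k : ℕ}
    (hdvd : gen c ∣ gen b ^ (k + 1) * x) : gen c * gen b ∣ x := by
  obtain ⟨u, hu⟩ := hdvd
  rw [pow_succ', mul_assoc] at hu
  obtain ⟨Z, hZ, -⟩ := (factorsThroughLcm_iff_of_adj h).1 (factorsThroughLcm_of_gen_mul_eq hu)
  induction k generalizing u Z with
  | zero => exact ⟨Z, by simpa [mul_assoc] using hZ⟩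
  | succ k ih =>
    rw [pow_succ', mul_assoc] at hZ
    obtain ⟨W, hW, -⟩ := (factorsThroughLcm_iff_of_adj h).1 (factorsThroughLcm_of_gen_mul_eq hZ)
    exact ih _ hZ _ hW

lemma semiconjBy_gen_mul_gen (h : G.Adj b c) :
    SemiconjBy (gen c * gen b : ArtinMonoid G) (gen c) (gen b) :=
  (gen_braid h.symm).trans (mul_assoc ..)

lemma semiconjBy_gen_of_semiconjBy_gen_pow {a b : V} {x : ArtinMonoid G} {k : ℕ}
    (h : SemiconjBy x (gen a ^ (k + 1)) (gen b ^ (k + 1))) : SemiconjBy x (gen a) (gen b) := by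
  obtain rfl | ⟨c, y, hx⟩ := eq_one_or_eq_gen_mul x
  · have hab : (gen a ^ (k + 1) : ArtinMonoid G) = gen b ^ (k + 1) := by simpa [SemiconjBy] using h
    obtain rfl := eq_of_gen_dvd_gen_pow (hab ▸ dvd_pow_self (gen a) k.succ_ne_zero)
    exact SemiconjBy.one_left _
  by_cases hbc : G.Adj b c
  · have hc : gen c ∣ x := Dvd.intro y hx.symm
    obtain ⟨z, hz⟩ := gen_mul_gen_dvd_of_gen_dvd_pow_mul hbc ((hc.mul_right _).trans h.eq.dvd)
    have hu := semiconjBy_gen_mul_gen hbc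
    rw [hz] at h ⊢
    exact hu.mul_left (semiconjBy_gen_of_semiconjBy_gen_pow
      (semiconjBy_of_mul_left (hu.pow_right _) h))
  · have hu : SemiconjBy (gen c : ArtinMonoid G) (gen b) (gen b) := (commute_gen hbc).symm
    rw [hx] at h ⊢
    exact hu.mul_left (semiconjBy_gen_of_semiconjBy_gen_pow
      (semiconjBy_of_mul_left (hu.pow_right _) h))
termination_by length x
decreasing_by
  · simp [hz]
  · simp [hx]

/-! ### Greatest common divisors -/

lemma mul_gen_mul_residue_dvd (ha : x * gen a ∣ p) (hb : x * gen b ∣ p) :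
    x * (gen a * residue a b) ∣ p := by
  obtain ⟨Y, rfl⟩ := ha
  rw [mul_assoc, mul_dvd_mul_left_cancel_iff] at hb ⊢
  obtain ⟨Y', hY'⟩ := hb
  obtain ⟨Z, rfl, -⟩ := factorsThroughLcm_of_gen_mul_eq hY'
  exact mul_dvd_mul_left _ (dvd_mul_right ..)

/-- The gcd is reached by extending a common divisor one generator at a time; by Garside's lemma the
extensions by `a` and by `b` have a common further extension, hence lead to the same element. -/
lemma exists_gcd_of_common_dvd (p q x : ArtinMonoid G) (hx : x ∣ p ∧ x ∣ q) :
    ∃ d, (d ∣ p ∧ d ∣ q) ∧ ∀ e, x ∣ e → e ∣ p ∧ e ∣ q → e ∣ d := by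
  have extend : ∀ b, x * gen b ∣ p ∧ x * gen b ∣ q →
      ∃ d, (d ∣ p ∧ d ∣ q) ∧ ∀ e, x * gen b ∣ e → e ∣ p ∧ e ∣ q → e ∣ d :=
    fun b hb ↦ exists_gcd_of_common_dvd p q (x * gen b) hb
  by_cases hmax : ∃ a, x * gen a ∣ p ∧ x * gen a ∣ q
  · obtain ⟨a, ha⟩ := hmax
    obtain ⟨d, hd, hd_max⟩ := extend a ha
    refine ⟨d, hd, fun e hxe he ↦ ?_⟩
    obtain ⟨y, rfl⟩ := hxe
    obtain rfl | ⟨b, z, rfl⟩ := eq_one_or_eq_gen_mul y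
    · rw [mul_one]
      exact (dvd_mul_right ..).trans (hd_max _ dvd_rfl ha)
    rw [← mul_assoc] at he ⊢
    have hb := And.imp (dvd_mul_right ..).trans (dvd_mul_right ..).trans he
    obtain ⟨d', hd', hd'_max⟩ := extend b hb
    have hlcm : x * (gen a * residue a b) ∣ d' :=
      hd'_max _ (by rw [gen_mul_residue_comm, ← mul_assoc]; exact dvd_mul_right ..)
        ⟨mul_gen_mul_residue_dvd ha.1 hb.1, mul_gen_mul_residue_dvd ha.2 hb.2⟩
    rw [← mul_assoc] at hlcm
    exact (hd'_max _ (dvd_mul_right ..) he).trans (hd_max d' ((dvd_mul_right ..).trans hlcm) hd')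
  · refine ⟨x, hx, fun e hxe he ↦ ?_⟩
    obtain ⟨y, rfl⟩ := hxe
    obtain rfl | ⟨b, z, rfl⟩ := eq_one_or_eq_gen_mul y
    · rw [mul_one]
    rw [← mul_assoc] at he
    exact (hmax ⟨b, And.imp (dvd_mul_right ..).trans (dvd_mul_right ..).trans he⟩).elim
termination_by length p - length x
decreasing_by
  have := length_le_of_dvd hb.1
  simp only [length_mul, length_gen] at this ⊢
  omega

lemma exists_gcd (p q : ArtinMonoid G) : ∃ d, ∀ e, e ∣ d ↔ e ∣ p ∧ e ∣ q := by
  obtain ⟨d, hd, hd_max⟩ := exists_gcd_of_common_dvd p q 1 ⟨one_dvd p, one_dvd q⟩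
  exact ⟨d, fun e ↦ ⟨fun he ↦ ⟨he.trans hd.1, he.trans hd.2⟩, hd_max e (one_dvd e)⟩⟩

/-! ### Quasi-central elements -/

/-- An element is quasi-central if moving a generator across it gives again a generator. -/
def IsQuasiCentral (p : ArtinMonoid G) : Prop := ∀ a, ∃ b, gen a * p = p * gen b

namespace IsQuasiCentral

lemma gen_dvd_of_adj (hp : IsQuasiCentral p) (hab : G.Adj a b) (ha : gen a ∣ p) : gen b ∣ p := by
  obtain ⟨y, hy⟩ := ha
  obtain ⟨a', ha'⟩ := hp a
  obtain ⟨b', hb'⟩ := hp b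
  have hby : gen b * p = gen a * (y * gen b') := by rw [hb', hy, mul_assoc]
  obtain ⟨z, hz, -⟩ :=
    (factorsThroughLcm_iff_of_adj hab.symm).1 (factorsThroughLcm_of_gen_mul_eq hby)
  have hap : gen a * p = gen a * (gen b * (z * gen a')) := by
    rw [ha']
    nth_rw 1 [hz]
    simp only [mul_assoc]
  exact ⟨_, mul_left_cancel hap⟩

lemma gen_dvd (hp : IsQuasiCentral p) (hG : G.Preconnected) (hne : p ≠ 1) (a : V) : gen a ∣ p := by
  obtain rfl | ⟨c, y, hy⟩ := eq_one_or_eq_gen_mul p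
  · exact (hne rfl).elim
  have hreach := (SimpleGraph.reachable_iff_reflTransGen c a).1 (hG c a)
  induction hreach with
  | refl => exact ⟨y, hy⟩
  | tail _ hadj ih => exact hp.gen_dvd_of_adj hadj ih

lemma gcd (hp : IsQuasiCentral p) (hq : IsQuasiCentral q) {d : ArtinMonoid G}
    (hd : ∀ e, e ∣ d ↔ e ∣ p ∧ e ∣ q) : IsQuasiCentral d := by
  intro a
  obtain ⟨d', hd'⟩ := exists_gcd (gen a * p) (gen a * q)
  obtain ⟨hdp, hdq⟩ := (hd d).1 dvd_rfl
  obtain ⟨hd'p, hd'q⟩ := (hd' d').1 dvd_rfl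
  have hdvd : gen a * d ∣ d' := (hd' _).2 ⟨mul_dvd_mul_left _ hdp, mul_dvd_mul_left _ hdq⟩
  have hdvd' : d' ∣ gen a * d := by
    obtain ⟨e, rfl⟩ := hdvd
    rw [mul_assoc, mul_dvd_mul_left_cancel_iff] at hd'p hd'q ⊢
    exact (hd _).2 ⟨hd'p, hd'q⟩
  have hd_dvd : d ∣ gen a * d := by
    refine ((hd' d).2 ⟨?_, ?_⟩).trans hdvd'
    · obtain ⟨b, hb⟩ := hp a
      exact hb ▸ hdp.mul_right _
    · obtain ⟨b, hb⟩ := hq a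
      exact hb ▸ hdq.mul_right _
  obtain ⟨u, hu⟩ := hd_dvd
  obtain ⟨b, rfl⟩ := exists_eq_gen_of_length_eq_one (x := u) (by
    have := congrArg length hu
    simp only [length_mul, length_gen] at this
    omega)
  exact ⟨b, hu⟩

lemma of_mul_left [Finite V] (hp : IsQuasiCentral p) (hpx : IsQuasiCentral (p * x)) :
    IsQuasiCentral x := by
  choose f hf using hp
  have hf_inj : Function.Injective f := by
    intro a b hab
    exact gen_injective (mul_right_cancel (b := p) (by rw [hf, hf, hab]))
  intro b
  obtain ⟨a, rfl⟩ := Finite.surjective_of_injective hf_inj b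
  obtain ⟨c, hc⟩ := hpx a
  exact ⟨c, mul_left_cancel (a := p) (by rw [← mul_assoc, ← hf, mul_assoc, hc, mul_assoc])⟩

lemma eq_of_length_eq [Finite V] (hp : IsQuasiCentral p) (hq : IsQuasiCentral q)
    (hG : G.Preconnected) (hlength : length p = length q) : p = q := by
  obtain ⟨d, hd⟩ := exists_gcd p q
  have hd_qc := hp.gcd hq hd
  obtain ⟨⟨u, hu⟩, ⟨v, hv⟩⟩ := (hd d).1 dvd_rfl
  have huv : length u = length v := by simpa [hu, hv] using hlength
  have hu_qc : IsQuasiCentral u := hd_qc.of_mul_left (hu ▸ hp)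
  have hv_qc : IsQuasiCentral v := hd_qc.of_mul_left (hv ▸ hq)
  obtain rfl | ⟨c, y, hy⟩ := eq_one_or_eq_gen_mul u
  · obtain rfl : v = 1 := eq_one_of_length_eq_zero (by simpa using huv.symm)
    rw [hu, hv]
  · have hv_ne : v ≠ 1 := by
      rintro rfl
      simp [hy] at huv
    have hcd : d * gen c ∣ d :=
      (hd _).2 ⟨hu ▸ mul_dvd_mul_left d ⟨y, hy⟩, hv ▸ mul_dvd_mul_left d (hv_qc.gen_dvd hG hv_ne c)⟩
    simpa using length_le_of_dvd hcd

end IsQuasiCentral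

end ArtinMonoid

/-! ### Positive braids -/

/-- The monoid of positive braids on `n` strands. -/
abbrev BraidMonoid (n : ℕ) : Type := ArtinMonoid (SimpleGraph.pathGraph (n - 1))

namespace BraidMonoid

open ArtinMonoid

variable {n : ℕ}

variable (n) in
/-- The generators as a sequence indexed by `ℕ`, with junk value `1` from `n - 1` on. -/
def genSeq (i : ℕ) : BraidMonoid n := if h : i < n - 1 then gen ⟨i, h⟩ else 1

lemma genSeq_val (a : Fin (n - 1)) : genSeq n a = gen a := dif_pos a.2

lemma isBraidSequence_genSeq : IsBraidSequence (genSeq n) (n - 1) where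
  commute {i j} hij hj := by
    rw [genSeq, genSeq, dif_pos (by omega : i < n - 1), dif_pos hj]
    apply commute_gen
    rw [SimpleGraph.pathGraph_adj, Fin.val_mk, Fin.val_mk]
    omega
  braid {i} hi := by
    rw [genSeq, genSeq, dif_pos (by omega : i < n - 1), dif_pos hi]
    exact gen_braid (SimpleGraph.pathGraph_adj.2 (.inl rfl))

variable (n) in
/-- The full twist `(σ_1 ⋯ σ_{n-1})^n` as a positive braid. The exponent is written `n - 1 + 1`
since the number of generators is `n - 1`, also for `n = 0`. -/
def posFullTwist : BraidMonoid n := ascendingProd (genSeq n) 0 (n - 1) ^ (n - 1 + 1)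

lemma commute_posFullTwist (x : BraidMonoid n) : Commute (posFullTwist n) x := by
  induction x using induction_gen_mul with
  | one => exact Commute.one_right _
  | gen_mul a x ih =>
    rw [← genSeq_val]
    exact (isBraidSequence_genSeq.commute_ascendingProd_pow a.2).mul_right ih

lemma gen_dvd_posFullTwist (a : Fin (n - 1)) : gen a ∣ posFullTwist n :=
  genSeq_val a ▸ isBraidSequence_genSeq.dvd_ascendingProd_pow a.2

end BraidMonoid

/-! ### The braid group as a group of fractions -/

namespace BraidGroup

open ArtinMonoid BraidMonoid

variable {n : ℕ}

lemma σ_braid {a b : Fin (n - 1)} (h : (b : ℕ) = a + 1) : σ a * σ b * σ a = σ b * σ a * σ b :=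
  PresentedGroup.mk_eq_mk_of_mul_inv_mem (.inl ⟨a, b, h, rfl⟩)

lemma commute_σ {a b : Fin (n - 1)} (h : (a : ℕ) + 1 < b) : Commute (σ a) (σ b) :=
  PresentedGroup.mk_eq_mk_of_mul_inv_mem (.inr ⟨a, b, h, rfl⟩)

variable (n) in
/-- The canonical map from positive braids to braids. -/
def ofBraidMonoid : BraidMonoid n →* BraidGroup n :=
  PresentedMonoid.lift σ (by
    rintro _ _ (⟨hab⟩ | @⟨a, b, hab⟩)
    · obtain h | h := SimpleGraph.pathGraph_adj.1 hab
      · simpa using σ_braid h.symm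
      · simpa using (σ_braid h.symm).symm
    · obtain h | h | rfl : (a : ℕ) + 1 < b ∨ (b : ℕ) + 1 < a ∨ a = b := by
        rw [SimpleGraph.pathGraph_adj] at hab
        omega
      · simpa using (commute_σ h).eq
      · simpa using (commute_σ h).eq.symm
      · rfl)

@[simp] lemma ofBraidMonoid_gen (a : Fin (n - 1)) : ofBraidMonoid n (gen a) = σ a := rfl

/-- The universal property of the braid group as the group completion of the braid monoid. -/
def lift {H : Type*} [Group H] (φ : BraidMonoid n →* H) : BraidGroup n →* H :=
  PresentedGroup.toGroup (f := fun a ↦ φ (gen a)) (by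
    rintro _ (⟨a, b, h, rfl⟩ | ⟨a, b, h, rfl⟩)
    · rw [map_mul, map_inv, mul_inv_eq_one]
      simpa using congrArg φ (gen_braid (SimpleGraph.pathGraph_adj.2 (.inl h.symm)))
    · rw [map_mul, map_inv, mul_inv_eq_one]
      have hab : ¬(SimpleGraph.pathGraph (n - 1)).Adj a b := by
        rw [SimpleGraph.pathGraph_adj]
        omega
      simpa using congrArg φ (commute_gen hab).eq)

@[simp] lemma lift_ofBraidMonoid {H : Type*} [Group H] (φ : BraidMonoid n →* H)
    (x : BraidMonoid n) : lift φ (ofBraidMonoid n x) = φ x := by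
  induction x using induction_gen_mul with
  | one => simp
  | gen_mul a x ih =>
    rw [map_mul, map_mul, ih, map_mul]
    exact congrArg (· * φ x) (PresentedGroup.toGroup.of _)

lemma ofBraidMonoid_injective : Function.Injective (ofBraidMonoid n) := by
  obtain ⟨N, _, f, hf_inj, hf_unit⟩ :=
    exists_injective_isUnit_of_dvd_central (commute_posFullTwist (n := n))
  have hunit (x : BraidMonoid n) : IsUnit (f x) := by
    induction x using induction_gen_mul with
    | one => simp
    | gen_mul a x ih =>
      rw [map_mul]
      exact (hf_unit _ (gen_dvd_posFullTwist a)).mul ih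
  intro x y h
  have hlift := congrArg (lift (IsUnit.liftRight f hunit)) h
  rw [lift_ofBraidMonoid, lift_ofBraidMonoid] at hlift
  exact hf_inj (congrArg Units.val hlift)

/-- The exponent sum of a braid. -/
def exponentSum : BraidGroup n →* Multiplicative ℤ :=
  lift ((Nat.castAddMonoidHom ℤ).toMultiplicative.comp lengthHom)

lemma exponentSum_ofBraidMonoid (x : BraidMonoid n) :
    exponentSum (ofBraidMonoid n x) = .ofAdd (length x : ℤ) :=
  lift_ofBraidMonoid _ x

lemma closure_range_σ : Subgroup.closure (Set.range (σ (n := n))) = ⊤ :=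
  PresentedGroup.closure_range_of _

lemma ofBraidMonoid_posFullTwist_pow_mem_center (k : ℕ) :
    ofBraidMonoid n (posFullTwist n ^ k) ∈ Subgroup.center (BraidGroup n) := by
  apply mem_center_of_commute_generators closure_range_σ
  rintro _ ⟨a, rfl⟩
  exact (((commute_posFullTwist (gen a)).pow_left k).map (ofBraidMonoid n)).symm

lemma exists_mul_posFullTwist_pow_eq (x : BraidGroup n) :
    ∃ k X, x * ofBraidMonoid n (posFullTwist n ^ k) = ofBraidMonoid n X := by
  have hx : x ∈ Subgroup.closure (Set.range σ) := closure_range_σ ▸ Subgroup.mem_top x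
  induction hx using Subgroup.closure_induction_left with
  | one => exact ⟨0, 1, by simp⟩
  | mul_left _ hs y _ ih =>
    obtain ⟨a, rfl⟩ := hs
    obtain ⟨k, X, hX⟩ := ih
    exact ⟨k, gen a * X, by rw [mul_assoc, hX, map_mul, ofBraidMonoid_gen]⟩
  | inv_mul_cancel _ hs y _ ih =>
    obtain ⟨a, rfl⟩ := hs
    obtain ⟨k, X, hX⟩ := ih
    obtain ⟨w, hw⟩ := gen_dvd_posFullTwist a
    have hwX : X * posFullTwist n = gen a * (w * X) := by
      rw [← (commute_posFullTwist X).eq, hw, mul_assoc]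
    refine ⟨k + 1, w * X, ?_⟩
    rw [pow_succ, map_mul, mul_assoc, ← mul_assoc y, hX, ← map_mul, hwX, map_mul,
      ofBraidMonoid_gen, inv_mul_cancel_left]

lemma isQuasiCentral_of_mem_center {p : BraidMonoid n}
    (hp : ofBraidMonoid n p ∈ Subgroup.center (BraidGroup n)) : IsQuasiCentral p := fun a ↦
  ⟨a, ofBraidMonoid_injective (by rw [map_mul, map_mul, Subgroup.mem_center_iff.1 hp])⟩

lemma eq_one_of_mem_center_of_exponentSum_eq_one {z : BraidGroup n}
    (hz : z ∈ Subgroup.center (BraidGroup n)) (hsum : exponentSum z = 1) : z = 1 := by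
  obtain ⟨k, p, hp⟩ := exists_mul_posFullTwist_pow_eq z
  have htwist := ofBraidMonoid_posFullTwist_pow_mem_center (n := n) k
  have hp_center : ofBraidMonoid n p ∈ Subgroup.center (BraidGroup n) := hp ▸ mul_mem hz htwist
  have hlength : length (posFullTwist n ^ k) = length p := by
    have := congrArg exponentSum hp
    rw [map_mul, hsum, one_mul, exponentSum_ofBraidMonoid, exponentSum_ofBraidMonoid] at this
    exact_mod_cast Multiplicative.ofAdd.injective this
  rw [← (isQuasiCentral_of_mem_center htwist).eq_of_length_eq
    (isQuasiCentral_of_mem_center hp_center) (SimpleGraph.pathGraph_preconnected _) hlength] at hp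
  exact mul_eq_right.1 hp

lemma disjoint_center_commutator :
    Disjoint (Subgroup.center (BraidGroup n)) (commutator (BraidGroup n)) :=
  Subgroup.disjoint_def.2 fun hz hcomm ↦ eq_one_of_mem_center_of_exponentSum_eq_one hz
    (Abelianization.commutator_subset_ker exponentSum hcomm)

lemma commute_σ_of_commute_pow {a : Fin (n - 1)} {x : BraidGroup n} {k : ℕ} (hk : k ≠ 0)
    (h : Commute (σ a ^ k) x) : Commute (σ a) x := by
  obtain ⟨k, rfl⟩ := Nat.exists_eq_succ_of_ne_zero hk
  obtain ⟨j, X, hX⟩ := exists_mul_posFullTwist_pow_eq x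
  have htwist (y : BraidGroup n) : Commute y (ofBraidMonoid n (posFullTwist n ^ j)) :=
    Subgroup.mem_center_iff.1 (ofBraidMonoid_posFullTwist_pow_mem_center j) y
  have hX_pow : Commute (σ a ^ (k + 1)) (ofBraidMonoid n X) := hX ▸ h.mul_right (htwist _)
  have hgen_pow : Commute X (gen a ^ (k + 1)) :=
    ofBraidMonoid_injective (by simpa using hX_pow.eq.symm)
  have hgen : Commute X (gen a) := semiconjBy_gen_of_semiconjBy_gen_pow hgen_pow
  have hσ : Commute (σ a) (x * ofBraidMonoid n (posFullTwist n ^ j)) :=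
    hX ▸ (hgen.map (ofBraidMonoid n)).symm
  simpa using hσ.mul_right (htwist (σ a)).inv_right

end BraidGroup

theorem center_finiteIndex_subgroup_quotient_braid_general (n : ℕ)
    (Γ : Subgroup (BraidGroup n ⧸ Subgroup.center (BraidGroup n))) (hΓ : Γ.FiniteIndex) :
    Subgroup.center Γ = ⊥ := by
  refine center_eq_bot_of_finiteIndex_quotient_center BraidGroup.closure_range_σ ?_
    BraidGroup.disjoint_center_commutator Γ
  rintro _ ⟨a, rfl⟩ x k hk h
  exact BraidGroup.commute_σ_of_commute_pow hk h

/-- STATEMENT 5: for `n ≥ 4`, every finite index subgroup of `B_n / Z(B_n)` has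
trivial center. -/
theorem center_finiteIndex_subgroup_quotient_braid (n : ℕ) (hn : 4 ≤ n)
    (Γ : Subgroup (BraidGroup n ⧸ Subgroup.center (BraidGroup n)))
    (hΓ : Γ.FiniteIndex) :
    Subgroup.center Γ = ⊥ :=
  center_finiteIndex_subgroup_quotient_braid_general n Γ hΓ
end

section
/- For n ≥ 4 and any finite index subgroup Ĝ of B_n/Z(B_n), the direct limit of the abelian groups Hom(Ĥ, ℤ), taken over all finite index subgroups Ĥ of Ĝ directed by reverse inclusion with restriction maps as connecting homomorphisms, is isomorphic as an abelian group to the direct sum ⊕_{i∈ℕ} ℚ of countably infinitely many copies of ℚ. -/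
/-- The finite index subgroups of `H`, ordered by *reverse* inclusion. -/
def FinIndexSubgroup (H : Type*) [Group H] : Type _ := {Γ : Subgroup H // Γ.FiniteIndex}

namespace FinIndexSubgroup

variable {H : Type*} [Group H]

instance : Preorder (FinIndexSubgroup H) :=
  Preorder.lift fun a => OrderDual.toDual a.1

/-- In the reverse-inclusion order, `i ≤ j` means `j` is a subgroup of `i`. -/
theorem le_iff {i j : FinIndexSubgroup H} (h : i ≤ j) : j.1 ≤ i.1 := h

instance : IsDirected (FinIndexSubgroup H) (· ≤ ·) :=
  ⟨fun a b => ⟨⟨a.1 ⊓ b.1, by haveI := a.2; haveI := b.2; infer_instance⟩,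
    by exact (inf_le_left : a.1 ⊓ b.1 ≤ a.1), by exact (inf_le_right : a.1 ⊓ b.1 ≤ b.1)⟩⟩

noncomputable instance : DecidableEq (FinIndexSubgroup H) := Classical.decEq _

end FinIndexSubgroup

/-- The abelian group `Hom(Γ, ℤ)` of homomorphisms from a finite index subgroup `Γ`
of `H` to `ℤ`. -/
abbrev HomToZ {H : Type*} [Group H] (i : FinIndexSubgroup H) : Type _ :=
  Additive i.1 →+ ℤ

/-- The connecting maps of the direct system: restriction of homomorphisms along the
inclusion of a smaller finite index subgroup. -/
def restrictHomToZ {H : Type*} [Group H] (i j : FinIndexSubgroup H) (hij : i ≤ j) :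
    HomToZ i →+ HomToZ j where
  toFun φ := φ.comp (MonoidHom.toAdditive (Subgroup.inclusion (FinIndexSubgroup.le_iff hij)))
  map_zero' := by ext; rfl
  map_add' φ ψ := by ext; rfl

instance {H : Type*} [Group H] :
    DirectedSystem (fun i : FinIndexSubgroup H => HomToZ i)
      (fun i j hij φ => restrictHomToZ i j hij φ) where
  map_self := by intro i x; ext; rfl
  map_map := by intro i j k hij hjk x; ext; rfl

/-- The direct limit of the groups `Hom(Γ, ℤ)` over all finite index subgroups `Γ`
of `H`, directed by reverse inclusion, with restriction as connecting maps. -/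
abbrev HomDirectLimit (H : Type*) [Group H] : Type _ :=
  AddCommGroup.DirectLimit (fun i : FinIndexSubgroup H => HomToZ i)
    (fun i j hij => restrictHomToZ i j hij)

/-!
A direct limit of groups `Hom(K, ℤ)` over the finite index subgroups `K` of a finitely generated
group is countable and torsion-free, and it is divisible since every `φ : K → ℤ` becomes divisible
by `d` on the kernel of `φ` modulo `d`. Hence it is a rational vector space of countable dimension,
and the dimension is infinite as soon as `rank Hom(K, ℤ)` is unbounded.

This unboundedness passes to a group from its quotients and its finite index subgroups. Forgetting
all but three strands, and killing the full twist of these, maps the pure braid group onto a free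
group `F` of rank two; the center of the braid group dies in `F`, which has trivial center. The
ranks are unbounded for `F` because `F` maps onto the wreath products `ℤ ≀ ℤ/m`, whose base groups
are free abelian of rank `m`.
-/

open Cardinal

section RationalVectorSpace

theorem nonempty_linearEquiv_finsupp_nat_of_aleph0_le_rank {V : Type*} [AddCommGroup V]
    [Module ℚ V] [Countable V] (hV : ℵ₀ ≤ Module.rank ℚ V) : Nonempty (V ≃ₗ[ℚ] (ℕ →₀ ℚ)) := by
  have rank_eq : Module.rank ℚ V = ℵ₀ := le_antisymm ((rank_le_card ℚ V).trans mk_le_aleph0) hV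
  exact nonempty_linearEquiv_of_lift_rank_eq (by simp [rank_eq])

theorem coeAddMonoidHom_divisibleHull_bijective {V : Type*} [AddCommMonoid V] [IsAddTorsionFree V]
    (hdiv : ∀ d : ℕ, d ≠ 0 → Function.Surjective fun v : V ↦ d • v) :
    Function.Bijective (DivisibleHull.coeAddMonoidHom V) := by
  refine ⟨DivisibleHull.coe_injective, fun x ↦ ?_⟩
  induction x with
  | mk v d =>
    obtain ⟨w, rfl⟩ := hdiv d d.ne_zero v
    exact ⟨w, DivisibleHull.mk_eq_mk.2 ⟨1, by simp⟩⟩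

theorem nonempty_addEquiv_finsupp_nat_rat {V : Type*} [AddCommGroup V] [Countable V]
    [IsAddTorsionFree V] (hdiv : ∀ d : ℕ, d ≠ 0 → Function.Surjective fun v : V ↦ d • v)
    (hrank : ℵ₀ ≤ Module.rank ℤ V) : Nonempty (V ≃+ (ℕ →₀ ℚ)) := by
  let e : V ≃+ DivisibleHull V :=
    AddEquiv.ofBijective _ (coeAddMonoidHom_divisibleHull_bijective hdiv)
  have : Countable (DivisibleHull V) := e.symm.injective.countable
  have hrankHull : ℵ₀ ≤ Module.rank ℚ (DivisibleHull V) := by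
    rwa [IsLocalization.rank_eq ℚ (nonZeroDivisors ℤ) le_rfl, ← e.toIntLinearEquiv.rank_eq]
  obtain ⟨f⟩ := nonempty_linearEquiv_finsupp_nat_of_aleph0_le_rank hrankHull
  exact ⟨e.trans f.toAddEquiv⟩

end RationalVectorSpace

theorem natCast_le_rank_int_of_injective {M N : Type*} [AddCommGroup M] [AddCommGroup N]
    {f : M →+ N} (hf : Function.Injective f) {m : ℕ} (hm : m ≤ Module.rank ℤ M) :
    m ≤ Module.rank ℤ N := by
  have lift_rank_le := (lift_le.2 hm).trans (f.toIntLinearMap.lift_rank_le_of_injective hf)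
  rwa [lift_natCast, nat_le_lift_iff] at lift_rank_le

section VirtualBettiNumber

variable {G H : Type*} [Group G] [Group H]

theorem compHom'_toAdditive_injective_of_finiteIndex_range {A : Type*} [AddCommGroup A]
    [IsAddTorsionFree A] (f : G →* H) [f.range.FiniteIndex] :
    Function.Injective
      (AddMonoidHom.compHom' f.toAdditive : (Additive H →+ A) →+ (Additive G →+ A)) := by
  rw [injective_iff_map_eq_zero]
  refine fun φ hφ ↦ AddMonoidHom.ext fun x ↦ ?_
  obtain ⟨d, hd, -, g, hg⟩ :=
    f.range.exists_pow_mem_of_index_ne_zero Subgroup.FiniteIndex.index_ne_zero x.toMul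
  have hdx : d • φ x = 0 := by
    rw [← map_nsmul, ← ofMul_toMul x, ← ofMul_pow, ← hg]
    exact DFunLike.congr_fun hφ (Additive.ofMul g)
  exact (nsmul_eq_zero_iff_right hd.ne').1 hdx

theorem finiteIndex_range_of_surjective {f : G →* H} (hf : Function.Surjective f) :
    f.range.FiniteIndex := by
  rw [MonoidHom.range_eq_top.2 hf]
  infer_instance

theorem finiteIndex_range_inclusion {K P : Subgroup G} [K.FiniteIndex] (hKP : K ≤ P) :
    (Subgroup.inclusion hKP).range.FiniteIndex := by
  rw [Subgroup.inclusion_range]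
  infer_instance

theorem finiteIndex_range_subgroupComap (f : G →* H) [f.range.FiniteIndex] (K : Subgroup H) :
    (f.subgroupComap K).range.FiniteIndex := by
  have range_eq : (f.subgroupComap K).range = f.range.subgroupOf K := by
    ext ⟨k, hk⟩
    constructor
    · rintro ⟨g, hg⟩
      exact ⟨g, congrArg Subtype.val hg⟩
    · rintro ⟨g, rfl⟩
      exact ⟨⟨g, hk⟩, rfl⟩
  rw [range_eq]
  infer_instance

theorem finiteIndex_comap (f : G →* H) (K : Subgroup H) [K.FiniteIndex] :
    (K.comap f).FiniteIndex :=
  ⟨by rw [Subgroup.index_comap]; exact (K.subgroupOf f.range).index_ne_zero_of_finite⟩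

theorem finiteIndex_map_subtype {P : Subgroup G} [P.FiniteIndex] (K : Subgroup P)
    [K.FiniteIndex] : (K.map P.subtype).FiniteIndex :=
  ⟨by rw [Subgroup.index_map_subtype]
      exact mul_ne_zero Subgroup.FiniteIndex.index_ne_zero Subgroup.FiniteIndex.index_ne_zero⟩

/-- `G` has infinite virtual first Betti number: the first Betti number `rank Hom(K, ℤ)` is
unbounded as `K` runs over the finite index subgroups of `G`. -/
def HasInfiniteVirtualBettiNumber (G : Type*) [Group G] : Prop :=
  ∀ m : ℕ, ∃ K : Subgroup G, K.FiniteIndex ∧ m ≤ Module.rank ℤ (Additive K →+ ℤ)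

namespace HasInfiniteVirtualBettiNumber

theorem of_finiteIndex_range (hH : HasInfiniteVirtualBettiNumber H) (f : G →* H)
    [f.range.FiniteIndex] : HasInfiniteVirtualBettiNumber G := by
  intro m
  obtain ⟨K, _, hm⟩ := hH m
  have := finiteIndex_range_subgroupComap f K
  exact ⟨K.comap f, finiteIndex_comap f K, natCast_le_rank_int_of_injective
    (compHom'_toAdditive_injective_of_finiteIndex_range (f.subgroupComap K)) hm⟩

theorem of_surjective (hH : HasInfiniteVirtualBettiNumber H) {f : G →* H}
    (hf : Function.Surjective f) : HasInfiniteVirtualBettiNumber G :=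
  have := finiteIndex_range_of_surjective hf
  hH.of_finiteIndex_range f

theorem subgroup (hG : HasInfiniteVirtualBettiNumber G) (P : Subgroup G) [P.FiniteIndex] :
    HasInfiniteVirtualBettiNumber P :=
  have : P.subtype.range.FiniteIndex := by rwa [P.range_subtype]
  hG.of_finiteIndex_range P.subtype

theorem of_subgroup {P : Subgroup G} [P.FiniteIndex] (hP : HasInfiniteVirtualBettiNumber P) :
    HasInfiniteVirtualBettiNumber G := by
  intro m
  obtain ⟨K, _, hm⟩ := hP m
  let e : K.map P.subtype ≃* K := (K.equivMapOfInjective P.subtype P.subtype_injective).symm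
  have := finiteIndex_range_of_surjective (f := e.toMonoidHom) e.surjective
  exact ⟨K.map P.subtype, finiteIndex_map_subtype K, natCast_le_rank_int_of_injective
    (compHom'_toAdditive_injective_of_finiteIndex_range e.toMonoidHom) hm⟩

theorem quotient_center_of_surjective (hH : HasInfiniteVirtualBettiNumber H)
    (center_eq_bot : Subgroup.center H = ⊥) {P : Subgroup G} [P.FiniteIndex] {f : P →* H}
    (hf : Function.Surjective f) : HasInfiniteVirtualBettiNumber (G ⧸ Subgroup.center G) := by
  let π := QuotientGroup.mk' (Subgroup.center G)
  have hπP : Function.Surjective (π.subgroupMap P) := π.subgroupMap_surjective P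
  have hker : (π.subgroupMap P).ker ≤ f.ker := by
    intro g hg
    have g_central : (g : G) ∈ Subgroup.center G :=
      (QuotientGroup.eq_one_iff _).1 (congrArg Subtype.val hg)
    rw [MonoidHom.mem_ker, ← Subgroup.mem_bot, ← center_eq_bot, Subgroup.mem_center_iff]
    intro h
    obtain ⟨p, rfl⟩ := hf h
    have p_comm_g : p * g = g * p := Subtype.ext (Subgroup.mem_center_iff.1 g_central p)
    rw [← map_mul, p_comm_g, map_mul]
  let fbar : P.map π →* H := (π.subgroupMap P).liftOfSurjective hπP ⟨f, hker⟩
  have hfbar : Function.Surjective fbar := by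
    intro h
    obtain ⟨p, rfl⟩ := hf h
    exact ⟨π.subgroupMap P p, MonoidHom.liftOfRightInverse_comp_apply _ _ _ ⟨f, hker⟩ p⟩
  have : (P.map π).FiniteIndex := ⟨ne_zero_of_dvd_ne_zero Subgroup.FiniteIndex.index_ne_zero
    (P.index_map_dvd (QuotientGroup.mk'_surjective _))⟩
  exact (hH.of_surjective hfbar).of_subgroup

end HasInfiniteVirtualBettiNumber

end VirtualBettiNumber

section DirectLimit

variable {G : Type*} [Group G]

theorem countable_of_fg [Group.FG G] : Countable G := by
  obtain ⟨α, _, f, hf⟩ := Group.fg_iff_exists_freeGroup_hom_surjective_finite.1 ‹Group.FG G›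
  exact hf.countable

theorem countable_addMonoidHom_of_fg {A : Type*} [AddMonoid A] [Countable A] [Group.FG G] :
    Countable (Additive G →+ A) := by
  obtain ⟨s, hs⟩ := Group.fg_def.1 ‹Group.FG G›
  let evalGenerators (φ : Additive G →+ A) (x : s) : A := φ (.ofMul x.1)
  have evalGenerators_injective : Function.Injective evalGenerators := fun φ ψ h ↦
    AddMonoidHom.toMultiplicativeRight.injective <| MonoidHom.eq_of_eqOn_dense hs
      fun x hx ↦ congrArg Multiplicative.ofAdd (congrFun h ⟨x, hx⟩)
  exact evalGenerators_injective.countable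

theorem exists_addMonoidHom_nsmul_eq {A : Type*} [AddZeroClass A] {d : ℕ} (φ : A →+ ℤ)
    (hφ : ∀ x, (d : ℤ) ∣ φ x) : ∃ ψ : A →+ ℤ, d • ψ = φ :=
  ⟨{  toFun x := φ x / d
      map_zero' := by simp
      map_add' x y := by rw [map_add, Int.add_ediv_of_dvd_left (hφ x)] },
    AddMonoidHom.ext fun x ↦ by simpa using Int.mul_ediv_cancel' (hφ x)⟩

namespace FinIndexSubgroup

instance : Nonempty (FinIndexSubgroup G) := ⟨⟨⊤, inferInstance⟩⟩

instance (i : FinIndexSubgroup G) : i.1.FiniteIndex := i.2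

instance [Group.FG G] : Countable (FinIndexSubgroup G) := by
  have fg (i : FinIndexSubgroup G) : ∃ s : Finset G, Subgroup.closure (s : Set G) = i.1 :=
    (Group.fg_iff_subgroup_fg i.1).1 inferInstance
  choose s hs using fg
  have s_injective : Function.Injective s := fun i j hij ↦ Subtype.ext (by rw [← hs, hij, hs])
  have : Countable G := countable_of_fg
  exact s_injective.countable

end FinIndexSubgroup

theorem restrictHomToZ_injective {i j : FinIndexSubgroup G} (hij : i ≤ j) :
    Function.Injective (restrictHomToZ i j hij) :=
  have := finiteIndex_range_inclusion (FinIndexSubgroup.le_iff hij)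
  compHom'_toAdditive_injective_of_finiteIndex_range (Subgroup.inclusion _)

theorem exists_le_forall_dvd_restrictHomToZ {d : ℕ} (hd : d ≠ 0) (i : FinIndexSubgroup G)
    (φ : HomToZ i) : ∃ (j : FinIndexSubgroup G) (hij : i ≤ j),
      ∀ x, (d : ℤ) ∣ restrictHomToZ i j hij φ x := by
  have : NeZero d := ⟨hd⟩
  let N : Subgroup i.1 :=
    (AddMonoidHom.toMultiplicativeRight ((Int.castAddHom (ZMod d)).comp φ)).ker
  have : Finite (Multiplicative (ZMod d)) := inferInstance
  have : N.FiniteIndex := inferInstance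
  have le : N.map i.1.subtype ≤ i.1 := Subgroup.map_subtype_le N
  refine ⟨⟨N.map i.1.subtype, finiteIndex_map_subtype N⟩, le, ?_⟩
  rintro ⟨_, y, hy, rfl⟩
  exact (ZMod.intCast_zmod_eq_zero_iff_dvd _ _).1 hy

namespace HomDirectLimit

/-- The canonical map `Hom(Γ, ℤ) → lim Hom(Γ, ℤ)` at a finite index subgroup `Γ`. -/
noncomputable abbrev of (i : FinIndexSubgroup G) : HomToZ i →+ HomDirectLimit G :=
  AddCommGroup.DirectLimit.of _ _ i

theorem exists_of (z : HomDirectLimit G) :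
    ∃ (i : FinIndexSubgroup G) (φ : HomToZ i), of i φ = z := by
  induction z using AddCommGroup.DirectLimit.induction_on with
  | _ i φ => exact ⟨i, φ, rfl⟩

theorem of_injective (i : FinIndexSubgroup G) : Function.Injective (of i) := by
  rw [injective_iff_map_eq_zero]
  intro φ hφ
  obtain ⟨j, hij, restrict_eq_zero⟩ := AddCommGroup.DirectLimit.of.zero_exact _ _ hφ
  exact (injective_iff_map_eq_zero _).1 (restrictHomToZ_injective hij) φ restrict_eq_zero

instance [Group.FG G] : Countable (HomDirectLimit G) := by
  have (i : FinIndexSubgroup G) : Countable (HomToZ i) := countable_addMonoidHom_of_fg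
  have sigma_surjective :
      Function.Surjective fun p : Σ i : FinIndexSubgroup G, HomToZ i ↦ of p.1 p.2 := fun z ↦
    have ⟨i, φ, h⟩ := exists_of z
    ⟨⟨i, φ⟩, h⟩
  exact sigma_surjective.countable

instance : IsAddTorsionFree (HomDirectLimit G) := by
  refine ⟨fun d hd ↦ (injective_iff_map_eq_zero
    (nsmulAddMonoidHom d : HomDirectLimit G →+ HomDirectLimit G)).2 fun z hz ↦ ?_⟩
  obtain ⟨i, φ, rfl⟩ := exists_of z
  rw [nsmulAddMonoidHom_apply, ← map_nsmul] at hz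
  have nsmul_eq_zero : d • φ = 0 := (injective_iff_map_eq_zero _).1 (of_injective i) _ hz
  have φ_eq_zero : φ = 0 := AddMonoidHom.ext fun x ↦
    (nsmul_eq_zero_iff_right hd).1 (DFunLike.congr_fun nsmul_eq_zero x)
  rw [φ_eq_zero, map_zero]

theorem nsmul_surjective {d : ℕ} (hd : d ≠ 0) :
    Function.Surjective fun z : HomDirectLimit G ↦ d • z := by
  intro z
  obtain ⟨i, φ, rfl⟩ := exists_of z
  obtain ⟨j, hij, dvd⟩ := exists_le_forall_dvd_restrictHomToZ hd i φ
  obtain ⟨ψ, hψ⟩ := exists_addMonoidHom_nsmul_eq _ dvd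
  refine ⟨of j ψ, ?_⟩
  dsimp only
  rw [← map_nsmul, hψ, AddCommGroup.DirectLimit.of_f]

theorem aleph0_le_rank (hG : HasInfiniteVirtualBettiNumber G) :
    ℵ₀ ≤ Module.rank ℤ (HomDirectLimit G) := by
  refine Cardinal.aleph0_le.2 fun m ↦ ?_
  obtain ⟨K, hK, hm⟩ := hG m
  exact natCast_le_rank_int_of_injective (of_injective ⟨K, hK⟩) hm

theorem nonempty_addEquiv_finsupp_nat_rat [Group.FG G] (hG : HasInfiniteVirtualBettiNumber G) :
    Nonempty (HomDirectLimit G ≃+ (ℕ →₀ ℚ)) :=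
  _root_.nonempty_addEquiv_finsupp_nat_rat (fun _ ↦ nsmul_surjective) (aleph0_le_rank hG)

end HomDirectLimit

end DirectLimit

section Lamplighter

open RegularWreathProduct

variable {G D Q : Type*} [Group G] [Group D] [Group Q]

/-- The `q`-th coordinate of a homomorphism `ψ : G → D ≀ᵣ Q` on the subgroup of `G` that `ψ` sends
to the base group `Q → D`. -/
def baseCoord (ψ : G →* D ≀ᵣ Q) (q : Q) : (rightHom.comp ψ).ker →* D where
  toFun g := (ψ g).left q
  map_one' := by simp
  map_mul' g h := by
    have right_eq_one : (ψ g).right = 1 := g.2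
    simp [right_eq_one]

theorem baseCoord_apply (ψ : G →* D ≀ᵣ Q) (q : Q) (g : (rightHom.comp ψ).ker) :
    baseCoord ψ q g = (ψ g).left q := rfl

theorem inl_mul_mulSingle_mul_inv [DecidableEq Q] (q : Q) (d : D) :
    (inl q * ⟨Pi.mulSingle 1 d, 1⟩ * (inl q)⁻¹ : D ≀ᵣ Q) = ⟨Pi.mulSingle q d, 1⟩ := by
  apply RegularWreathProduct.ext
  · funext x
    simp [Pi.mulSingle_apply, inv_mul_eq_one, @eq_comm _ q x]
  · simp

theorem card_le_rank_of_mulSingle_mem_range [Finite Q] [DecidableEq Q]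
    (ψ : G →* Multiplicative ℤ ≀ᵣ Q) (hψ : ∀ q, ⟨Pi.mulSingle q (.ofAdd 1), 1⟩ ∈ ψ.range) :
    Nat.card Q ≤ Module.rank ℤ (Additive (rightHom.comp ψ).ker →+ ℤ) := by
  choose g hg using hψ
  let coord (q : Q) : Additive (rightHom.comp ψ).ker →+ ℤ := (baseCoord ψ q).toAdditiveLeft
  let lamp (q : Q) : Additive (rightHom.comp ψ).ker := .ofMul ⟨g q, by simp [hg]⟩
  have coord_lamp (q r : Q) : coord q (lamp r) = (Pi.single r 1 : Q → ℤ) q :=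
    congrArg (fun w ↦ (w.left q).toAdd) (hg r)
  have linearIndependent_coord : LinearIndependent ℤ coord :=
    LinearIndependent.of_pairwise_dual_eq_zero_one coord
      (fun r ↦ (AddMonoidHom.eval (lamp r)).toIntLinearMap)
      (fun r q hrq ↦ by simp [coord_lamp, hrq.symm]) (fun q ↦ by simp [coord_lamp])
  have card_le := linearIndependent_coord.cardinal_lift_le_rank
  rwa [← Nat.cast_card, lift_natCast, nat_le_lift_iff] at card_le

theorem hasInfiniteVirtualBettiNumber_freeGroup (α : Type*) [Nontrivial α] :
    HasInfiniteVirtualBettiNumber (FreeGroup α) := by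
  classical
  intro m
  obtain ⟨x, y, hxy⟩ := exists_pair_ne α
  let q : Multiplicative (ZMod (m + 1)) := .ofAdd 1
  let ψ : FreeGroup α →* Multiplicative ℤ ≀ᵣ Multiplicative (ZMod (m + 1)) :=
    FreeGroup.lift fun z ↦ if z = x then inl q else ⟨Pi.mulSingle 1 (.ofAdd 1), 1⟩
  have mulSingle_mem (r) : ⟨Pi.mulSingle r (.ofAdd 1), 1⟩ ∈ ψ.range := by
    obtain ⟨k, rfl⟩ : ∃ k : ℕ, q ^ k = r :=
      ⟨r.toAdd.val, Multiplicative.toAdd.injective (by simp [q])⟩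
    refine ⟨.of x ^ k * .of y * (.of x ^ k)⁻¹, ?_⟩
    rw [← inl_mul_mulSingle_mul_inv]
    simp [ψ, hxy.symm]
  have : Finite (Multiplicative (ZMod (m + 1))) := inferInstance
  have card_le := card_le_rank_of_mulSingle_mem_range ψ mulSingle_mem
  refine ⟨(rightHom.comp ψ).ker, inferInstance, le_trans ?_ card_le⟩
  simp

theorem center_freeGroup (α : Type*) [Nontrivial α] : Subgroup.center (FreeGroup α) = ⊥ := by
  classical
  refine (Subgroup.eq_bot_iff_forall _).2 fun z hz ↦ ?_
  by_contra hz1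
  obtain ⟨⟨x, ε⟩, t, hword⟩ := List.exists_cons_of_ne_nil (mt FreeGroup.toWord_eq_nil_iff.1 hz1)
  obtain ⟨y, hyx⟩ := exists_ne x
  let letter : α × Bool := (y, (((x, ε) :: t).getLast (List.cons_ne_nil _ _)).2)
  have reduced : FreeGroup.IsReduced ((x, ε) :: t) := hword ▸ FreeGroup.isReduced_toWord
  have reduced_cons : FreeGroup.IsReduced (letter :: (x, ε) :: t) :=
    List.isChain_cons_cons.2 ⟨fun h ↦ absurd h hyx, reduced⟩
  have reduced_append : FreeGroup.IsReduced ((x, ε) :: t ++ [letter]) := by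
    refine List.isChain_append.2 ⟨reduced, List.isChain_singleton _, ?_⟩
    simp [letter, List.getLast?_eq_getLast_of_ne_nil]
  have hcomm : FreeGroup.mk [letter] * z = z * FreeGroup.mk [letter] :=
    Subgroup.mem_center_iff.1 hz _
  rw [← FreeGroup.mk_toWord (x := z), hword, FreeGroup.mul_mk, FreeGroup.mul_mk,
    ← FreeGroup.toWord_inj, FreeGroup.toWord_mk, FreeGroup.toWord_mk, List.singleton_append,
    reduced_cons.reduce_eq, reduced_append.reduce_eq] at hcomm
  exact hyx (congrArg Prod.fst (List.cons.inj hcomm).1)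

end Lamplighter

section Braid

open Equiv RegularWreathProduct

variable {L : Type*} [Group L] (a b : L)

/-- The label of a crossing between positions `i` and `i + 1` for three marked strands at positions
`x 0`, `x 1`, `x 2`. Multiplied along a pure braid, the labels give the homomorphism that forgets
all other strands and sends the pure braid generators `A₀₁` and `A₁₂` to `a` and `b`; the label of
`A₀₂` is chosen such that the full twist of the three marked strands becomes trivial. Only one of
the two crossings in `σ_i ^ 2` is counted, namely the one with the smaller strand on the left. -/
def crossingLabel (i : ℕ) (x : Fin 3 → ℕ) : L :=
  if x 0 = i ∧ x 1 = i + 1 then a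
  else if x 1 = i ∧ x 2 = i + 1 then b
  else if x 0 = i ∧ x 2 = i + 1 then if i < x 1 then (a * b)⁻¹ else (b * a)⁻¹
  else 1

theorem swap_braid {α : Type*} [DecidableEq α] {x y z : α} (hxy : x ≠ y) (hyz : y ≠ z) :
    swap x y * swap y z * swap x y = swap y z * swap x y * swap y z := by
  ext
  grind [Perm.mul_apply]

theorem position_cases (i p : ℕ) : p = i ∨ p = i + 1 ∨ p = i + 2 ∨
    (p ≠ i ∧ p ≠ i + 1 ∧ p ≠ i + 2 ∧ (i < p ↔ i + 1 < p) ∧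
      swap i (i + 1) p = p ∧ swap (i + 1) (i + 2) p = p) := by
  grind

theorem crossingLabel_braid (i : ℕ) {x : Fin 3 → ℕ} (hx : Function.Injective x) :
    crossingLabel a b i x * crossingLabel a b (i + 1) (swap i (i + 1) ∘ x) *
        crossingLabel a b i (swap (i + 1) (i + 2) ∘ swap i (i + 1) ∘ x) =
      crossingLabel a b (i + 1) x * crossingLabel a b i (swap (i + 1) (i + 2) ∘ x) *
        crossingLabel a b (i + 1) (swap i (i + 1) ∘ swap (i + 1) (i + 2) ∘ x) := by
  have h01 : x 0 ≠ x 1 := hx.ne (by decide)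
  have h12 : x 1 ≠ x 2 := hx.ne (by decide)
  have h02 : x 0 ≠ x 2 := hx.ne (by decide)
  have swap_right : swap i (i + 1) (i + 2) = i + 2 :=
    swap_apply_of_ne_of_ne (by simp) (by simp)
  have swap_left : swap (i + 1) (i + 2) i = i := swap_apply_of_ne_of_ne (by simp) (by simp)
  have ne_add_two : i ≠ i + 1 + 1 := by omega
  rcases position_cases i (x 0) with h0 | h0 | h0 | h0 <;>
  rcases position_cases i (x 1) with h1 | h1 | h1 | h1 <;>
  rcases position_cases i (x 2) with h2 | h2 | h2 | h2 <;>
  first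
  | omega
  | simp [crossingLabel, *]

variable {a b} in
theorem crossingLabel_swap_comp {i j : ℕ} (hij : i + 1 < j ∨ j + 1 < i) (x : Fin 3 → ℕ) :
    crossingLabel a b j (swap i (i + 1) ∘ x) = crossingLabel a b j x := by
  have swap_eq_left (p : ℕ) : swap i (i + 1) p = j ↔ p = j := by grind
  have swap_eq_right (p : ℕ) : swap i (i + 1) p = j + 1 ↔ p = j + 1 := by grind
  have lt_swap (p : ℕ) : j < swap i (i + 1) p ↔ j < p := by grind
  simp only [crossingLabel, Function.comp_apply, swap_eq_left, swap_eq_right, lt_swap]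

theorem crossingLabel_commute {i j : ℕ} (hij : i + 1 < j) (x : Fin 3 → ℕ) :
    Commute (crossingLabel a b i x) (crossingLabel a b j x) := by
  have eq_one : crossingLabel a b i x = 1 ∨ crossingLabel a b j x = 1 := by
    grind [crossingLabel]
  rcases eq_one with h | h <;> simp [h]

variable {k : ℕ}

/-- The positions of the strands `0`, `1`, `2` after the permutation `τ`. -/
def markedPositions (τ : Perm (Fin (k + 3))) (s : Fin 3) : ℕ := τ (s.castLE (by simp))

theorem markedPositions_injective (τ : Perm (Fin (k + 3))) :
    Function.Injective (markedPositions τ) :=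
  Fin.val_injective.comp (τ.injective.comp (Fin.castLE_injective _))

theorem markedPositions_one : markedPositions (1 : Perm (Fin (k + 3))) = Fin.val := rfl

theorem markedPositions_swap_mul (i : Fin (k + 2)) (τ : Perm (Fin (k + 3))) :
    markedPositions (swap i.castSucc i.succ * τ) = swap (i : ℕ) (i + 1) ∘ markedPositions τ :=
  funext fun _ ↦ Fin.val_injective.map_swap i.castSucc i.succ _

/-- The image of `σ_i` in the wreath product: its permutation together with its crossing labels, as
a function of the permutation performed before. -/
def labelledCrossing (i : Fin (k + 2)) : L ≀ᵣ Perm (Fin (k + 3)) where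
  left τ := crossingLabel a b i (markedPositions τ)
  right := swap i.castSucc i.succ

theorem labelledCrossing_braid {i j : Fin (k + 2)} (hij : (j : ℕ) = i + 1) :
    labelledCrossing a b i * labelledCrossing a b j * labelledCrossing a b i =
      labelledCrossing a b j * labelledCrossing a b i * labelledCrossing a b j := by
  apply RegularWreathProduct.ext
  · funext τ
    simp only [labelledCrossing, mul_left, Pi.mul_apply, swap_inv, mul_assoc,
      markedPositions_swap_mul, hij]
    simpa only [mul_assoc] using crossingLabel_braid a b i (markedPositions_injective τ)
  · have succ_eq : i.succ = j.castSucc := Fin.ext hij.symm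
    simp only [labelledCrossing, mul_right, succ_eq]
    exact swap_braid (by simp [Fin.ext_iff, hij]) (by simp [Fin.ext_iff])

theorem labelledCrossing_comm {i j : Fin (k + 2)} (hij : (i : ℕ) + 1 < j) :
    labelledCrossing a b i * labelledCrossing a b j =
      labelledCrossing a b j * labelledCrossing a b i := by
  apply RegularWreathProduct.ext
  · funext τ
    simp only [labelledCrossing, mul_left, Pi.mul_apply, swap_inv, markedPositions_swap_mul,
      crossingLabel_swap_comp (.inl hij), crossingLabel_swap_comp (.inr hij)]
    exact crossingLabel_commute a b hij _
  · exact (Perm.disjoint_swap_swap (by grind)).commute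

/-- The homomorphism recording the permutation of a braid and the products of its crossing labels,
whose coordinate at `1` restricts to a homomorphism from the pure braid group to `L`. -/
def braidToWreath : BraidGroup (k + 3) →* L ≀ᵣ Perm (Fin (k + 3)) :=
  PresentedGroup.toGroup (f := labelledCrossing a b) <| by
    rintro r (⟨i, j, hij, rfl⟩ | ⟨i, j, hij, rfl⟩) <;>
      simp only [map_mul, map_inv, FreeGroup.lift_apply_of, mul_inv_eq_one]
    · exact labelledCrossing_braid a b hij
    · exact labelledCrossing_comm a b hij

theorem braidToWreath_σ (i : Fin (k + 2)) :
    braidToWreath a b (σ (n := k + 3) i) = labelledCrossing a b i :=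
  PresentedGroup.toGroup.of _

theorem braidToWreath_σ_sq (i : Fin (k + 2)) :
    braidToWreath a b (σ (n := k + 3) i ^ 2) =
      ⟨fun τ ↦ crossingLabel a b i (markedPositions τ) *
        crossingLabel a b i (swap (i : ℕ) (i + 1) ∘ markedPositions τ), 1⟩ := by
  rw [map_pow, braidToWreath_σ, pow_two]
  apply RegularWreathProduct.ext
  · funext τ
    simp [labelledCrossing, markedPositions_swap_mul]
  · simp [labelledCrossing]

theorem crossingLabel_mul_mem_range_baseCoord (i : Fin (k + 2)) :
    crossingLabel a b i Fin.val * crossingLabel a b i (swap (i : ℕ) (i + 1) ∘ Fin.val) ∈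
      (baseCoord (braidToWreath (k := k) a b) 1).range :=
  ⟨⟨σ (n := k + 3) i ^ 2, congrArg right (braidToWreath_σ_sq a b i)⟩, by
    simp only [baseCoord_apply, braidToWreath_σ_sq, markedPositions_one]⟩

theorem baseCoord_braidToWreath_surjective :
    Function.Surjective (baseCoord (braidToWreath (k := k) (FreeGroup.of false) (.of true)) 1) := by
  rw [← MonoidHom.range_eq_top, eq_top_iff, ← FreeGroup.closure_range_of, Subgroup.closure_le]
  rintro _ ⟨_ | _, rfl⟩
  · simpa [crossingLabel, swap_apply_def] using
      crossingLabel_mul_mem_range_baseCoord (FreeGroup.of false) (.of true) (0 : Fin (k + 2))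
  · simpa [crossingLabel, swap_apply_def] using
      crossingLabel_mul_mem_range_baseCoord (FreeGroup.of false) (.of true) (1 : Fin (k + 2))

theorem hasInfiniteVirtualBettiNumber_braidGroup_quotient_center {n : ℕ} (hn : 3 ≤ n) :
    HasInfiniteVirtualBettiNumber (BraidGroup n ⧸ Subgroup.center (BraidGroup n)) := by
  obtain ⟨k, rfl⟩ := Nat.exists_eq_add_of_le' hn
  exact (hasInfiniteVirtualBettiNumber_freeGroup Bool).quotient_center_of_surjective
    (center_freeGroup Bool) baseCoord_braidToWreath_surjective

instance (n : ℕ) : Group.FG (BraidGroup n) :=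
  Group.fg_iff.2 ⟨_, PresentedGroup.closure_range_of _, Set.finite_range _⟩

end Braid

theorem homDirectLimit_of_braid_quotient_iso_QInfty_general {n : ℕ} (hn : 3 ≤ n)
    (Ghat : Subgroup (BraidGroup n ⧸ Subgroup.center (BraidGroup n))) [Ghat.FiniteIndex] :
    Nonempty (HomDirectLimit Ghat ≃+ (ℕ →₀ ℚ)) :=
  HomDirectLimit.nonempty_addEquiv_finsupp_nat_rat
    ((hasInfiniteVirtualBettiNumber_braidGroup_quotient_center hn).subgroup Ghat)

/-- STATEMENT 15: for `n ≥ 4` and any finite index subgroup `Ghat` of `B_n/Z(B_n)`, the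
direct limit of the groups `Hom(Ĥ, ℤ)` over all finite index subgroups `Ĥ` of `Ghat`
(directed by reverse inclusion, with restriction as connecting maps) is isomorphic to
`⊕_{i ∈ ℕ} ℚ`. -/
theorem homDirectLimit_of_braid_quotient_iso_QInfty (n : ℕ) (hn : 4 ≤ n)
    (Ghat : Subgroup (BraidGroup n ⧸ Subgroup.center (BraidGroup n)))
    (hGhat : Ghat.FiniteIndex) :
    Nonempty (HomDirectLimit Ghat ≃+ (ℕ →₀ ℚ)) := by
  exact homDirectLimit_of_braid_quotient_iso_QInfty_general (by omega) Ghat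
end
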